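/- arXiv:2402.02575 — 2 statements merged into one kernel-verified Lean document; each statement's English description precedes it below -/
import Mathlib

section
/- For every ε > 0 there exists a measurable map f : X → Fin 3 such that μ({x : ∃ s ∈ S, f(s • x) = f(x)}) < ε. (Upper-bound half of the computation of the approximate chromatic number of F_2: the Bernoulli shift of F_2 admits measurable 3-labellings that are proper except on a set of measure less than ε.) -/
/-!
Among the measurable partial proper colourings of the orbits, whose uncoloured points are called
holes, the infimum of the measure of the set of holes is zero.

A hole can be moved along a path by shifting the colours of the path by one step. In a tree in which
every degree is at most `2k - 2`, where `k` is the number of colours, the pigeonhole principle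
provides at the end of such a path a colour which occurs on at most one neighbour off the path. If
it occurs on none, the hole at the end can be filled; otherwise the path can be extended to that
neighbour. If two holes can be moved to the same vertex, moving both there merges them into one. So
in a neighbourhood where no finite modification decreases the number of holes, each hole has shift
paths of every length less than `N`, and no two holes have shift paths to the same vertex; by mass
transport such holes have measure at most `1 / N`.

Hence a colouring with many holes admits finite modifications decreasing the number of holes on a
set of positive measure. As the action is essentially free, a piece of that set whose measure
depends only on the measure of the holes can be chosen such that the modifications of the orbits at
its points do not interfere. Carrying them out decreases the measure of the holes by a definite
amount, which is impossible close to the infimum.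
-/

open MeasureTheory

open scoped Finset

section AcyclicGraphs

variable {V : Type*} {G : SimpleGraph V}

theorem eq_of_isPath_of_isAcyclic (hG : G.IsAcyclic) {u v : V} {p q : G.Walk u v} (hp : p.IsPath)
    (hq : q.IsPath) : p = q :=
  congrArg Subtype.val ((hG.subsingleton_path u v).elim ⟨p, hp⟩ ⟨q, hq⟩)

theorem length_eq_dist_of_isAcyclic (hG : G.IsAcyclic) {u v : V} {p : G.Walk u v} (hp : p.IsPath) :
    p.length = G.dist u v := by
  obtain ⟨q, hq, hlength⟩ := p.reachable.exists_path_of_dist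
  rw [← hlength, eq_of_isPath_of_isAcyclic hG hp hq]

theorem eq_of_adj_of_dist_eq_add_one (hG : G.IsAcyclic) {m x y z : V} (hy : G.Adj x y)
    (hz : G.Adj x z) (hdy : G.dist m x = G.dist m y + 1) (hdz : G.dist m x = G.dist m z + 1) :
    y = z := by
  have hx : G.Reachable m x := .of_dist_ne_zero (by lia)
  obtain ⟨p, hp⟩ := (hx.trans hy.reachable).exists_walk_length_eq_dist
  obtain ⟨q, hq⟩ := (hx.trans hz.reachable).exists_walk_length_eq_dist
  have hp' : (p.concat hy.symm).IsPath :=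
    SimpleGraph.Walk.isPath_of_length_eq_dist _ (by rw [p.length_concat, hp, hdy])
  have hq' : (q.concat hz.symm).IsPath :=
    SimpleGraph.Walk.isPath_of_length_eq_dist _ (by rw [q.length_concat, hq, hdz])
  simpa using congrArg SimpleGraph.Walk.penultimate (eq_of_isPath_of_isAcyclic hG hp' hq')

theorem dist_fst_eq_dist_snd_add_one (hG : G.IsAcyclic) {u v : V} {p : G.Walk u v}
    (hp : p.IsPath) {d : G.Dart} (hd : d ∈ p.darts) : G.dist v d.fst = G.dist v d.snd + 1 := by
  induction p with
  | nil => simp at hd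
  | cons hadj p ih =>
    obtain rfl | hd := List.mem_cons.mp hd
    · have h := length_eq_dist_of_isAcyclic hG hp
      rw [SimpleGraph.Walk.length_cons, length_eq_dist_of_isAcyclic hG hp.of_cons] at h
      rw [G.dist_comm, ← h, G.dist_comm]
    · exact ih hp.of_cons hd

theorem exists_dart_fst_eq {u v x : V} (p : G.Walk u v) (hx : x ∈ p.support) (hxv : x ≠ v) :
    ∃ d ∈ p.darts, d.fst = x := by
  rw [← p.map_fst_darts_append, List.mem_append, List.mem_singleton] at hx
  simpa [hxv] using hx

/-- A cycle would have two distinct edges descending from a vertex of maximal depth. -/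
theorem isAcyclic_of_depth (depth : V → ℕ) (hne : ∀ ⦃v w⦄, G.Adj v w → depth v ≠ depth w)
    (huniq : ∀ ⦃v w w'⦄, G.Adj v w → G.Adj v w' → depth w < depth v → depth w' < depth v → w = w') :
    G.IsAcyclic := by
  classical
  intro u p hp
  obtain ⟨m, hm, hmax⟩ := p.support.toFinset.exists_max_image depth ⟨u, by simp⟩
  rw [List.mem_toFinset] at hm
  set q := p.rotate m hm with hqdef
  have hq : q.IsCycle := hp.rotate hm
  have hdepth (w) (hw : w ∈ q.support) (hadj : G.Adj m w) : depth w < depth m :=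
    (hmax w (by simpa [hqdef] using hw)).lt_of_ne (hne hadj).symm
  exact hq.snd_ne_penultimate <| huniq (q.adj_snd hq.not_nil) (q.adj_penultimate hq.not_nil).symm
    (hdepth _ (q.getVert_mem_support 1) (q.adj_snd hq.not_nil))
    (hdepth _ (q.getVert_mem_support _) (q.adj_penultimate hq.not_nil).symm)

theorem mem_ball_of_mem_support {u v w : V} {p : G.Walk u v} {n : ℕ} (hn : p.length < n)
    (hw : w ∈ p.support) : w ∈ G.ball u n := by
  classical
  rw [G.mem_ball, G.edist_comm]
  refine (p.takeUntil w hw).edist_le.trans_lt ?_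
  exact_mod_cast (p.length_takeUntil_le_length hw).trans_lt hn

theorem finite_ball [G.LocallyFinite] (v : V) (n : ℕ) : (G.ball v n).Finite := by
  induction n with
  | zero => simp
  | succ n ih =>
    refine (Set.finite_singleton v |>.union
      (ih.biUnion fun u _ => (G.neighborSet u).toFinite)).subset fun w hw => ?_
    rw [G.mem_ball] at hw
    obtain ⟨p, hp⟩ := G.exists_walk_of_edist_ne_top hw.ne_top
    cases p with
    | nil => simp
    | @cons _ u _ hadj p =>
      refine Or.inr (Set.mem_biUnion (x := u) ?_ hadj.symm)
      refine G.mem_ball.mpr (p.edist_le.trans_lt ?_)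
      rw [← hp] at hw
      rw [SimpleGraph.Walk.length_cons] at hw
      norm_cast at hw ⊢
      lia

end AcyclicGraphs

section PartialColorings

variable {V κ : Type*} {G : SimpleGraph V}

/-- A proper colouring of part of a graph. The value `none` marks an uncoloured vertex, called a
hole. -/
def IsPartialColoring (G : SimpleGraph V) (F : V → Option κ) : Prop :=
  ∀ ⦃v w⦄, G.Adj v w → F v = F w → F v = none

/-- The number of holes of `F` can be decreased by changing `F` only inside `B`. -/
def IsImprovable (G : SimpleGraph V) (B : Finset V) (F : V → Option κ) : Prop :=
  ∃ F' : V → Option κ, IsPartialColoring G F' ∧ (∀ v ∉ B, F' v = F v) ∧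
    #{v ∈ B | F' v = none} < #{v ∈ B | F v = none}

/-- A set of vertices which is a subtree with root `m`, on which every vertex other than the root
may simultaneously take over the colour of its parent without producing a conflict outside of
the set. -/
def IsShiftable (G : SimpleGraph V) (F : V → Option κ) (m : V) (T : Set V) : Prop :=
  ∀ x ∈ T, x ≠ m → ∃ y ∈ T, G.Adj x y ∧ G.dist m x = G.dist m y + 1 ∧ F y ≠ none ∧
    ∀ z, G.Adj x z → F z = F y → z ∈ T

variable {F : V → Option κ} {m : V} {T T' : Set V}

theorem IsShiftable.union (hT : IsShiftable G F m T) (hT' : IsShiftable G F m T') :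
    IsShiftable G F m (T ∪ T') := by
  rintro x (hx | hx) hxm
  · obtain ⟨y, hy, hxy, hdist, hcol, hT⟩ := hT x hx hxm
    exact ⟨y, .inl hy, hxy, hdist, hcol, fun z hz hzy => .inl (hT z hz hzy)⟩
  · obtain ⟨y, hy, hxy, hdist, hcol, hT'⟩ := hT' x hx hxm
    exact ⟨y, .inr hy, hxy, hdist, hcol, fun z hz hzy => .inr (hT' z hz hzy)⟩

theorem IsShiftable.reachable (hT : IsShiftable G F m T) {x : V} (hx : x ∈ T) :
    G.Reachable m x := by
  obtain rfl | hxm := eq_or_ne x m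
  · rfl
  · obtain ⟨y, -, -, hdist, -⟩ := hT x hx hxm
    exact .of_dist_ne_zero (by lia)

theorem IsPartialColoring.of_eqOn_compl (hF : IsPartialColoring G F) {F' : V → Option κ}
    (hcompl : ∀ v ∉ T, F' v = F v)
    (hboundary : ∀ v ∈ T, ∀ w ∉ T, G.Adj v w → F' v = F w → F' v = none)
    (hinside : ∀ v ∈ T, ∀ w ∈ T, G.Adj v w → F' v = F' w → F' v = none) :
    IsPartialColoring G F' := by
  intro v w hvw heq
  by_cases hv : v ∈ T <;> by_cases hw : w ∈ T
  · exact hinside v hv w hw hvw heq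
  · exact hboundary v hv w hw hvw (heq.trans (hcompl w hw))
  · exact heq ▸ hboundary w hw v hv hvw.symm (heq.symm.trans (hcompl v hv))
  · rw [hcompl v hv, hcompl w hw] at heq
    rw [hcompl v hv, hF hvw heq]

theorem IsShiftable.exists_shift (hT : IsShiftable G F m T) (hG : G.IsAcyclic)
    (hF : IsPartialColoring G F) (hm : m ∈ T) (o : Option κ) (hom : o ≠ none → o ≠ F m)
    (hoT : o ≠ none → ∀ z, G.Adj m z → F z = o → z ∈ T) :
    ∃ F' : V → Option κ, IsPartialColoring G F' ∧ (∀ v ∉ T, F' v = F v) ∧ F' m = o ∧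
      ∀ v ∈ T, v ≠ m → F' v ≠ none := by
  classical
  have hreachable (v) (hv : v ∈ T) : G.Reachable m v := hT.reachable hv
  choose! parent hparent hadj hdist hcolored hconflict using hT
  set F' : V → Option κ := fun v => if v = m then o else if v ∈ T then F (parent v) else F v
    with hF'
  have hroot : F' m = o := if_pos rfl
  have hcompl (v) (hv : v ∉ T) : F' v = F v := by
    simp [hF', hv, (ne_of_mem_of_not_mem hm hv).symm]
  have hshift (v) (hv : v ∈ T) (hvm : v ≠ m) : F' v = F (parent v) := by simp [hF', hv, hvm]
  have hedge (v) (hv : v ∈ T) (w) (hw : w ∈ T) (hvw : G.Adj v w)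
      (hd : G.dist m v = G.dist m w + 1) (heq : F' v = F' w) : F' v = none := by
    have hvm : v ≠ m := by rintro rfl; simp at hd
    have hpw : parent v = w :=
      eq_of_adj_of_dist_eq_add_one hG (hadj v hv hvm) hvw (hdist v hv hvm) hd
    rw [hshift v hv hvm, hpw] at heq ⊢
    obtain rfl | hwm := eq_or_ne w m
    · by_contra hne
      exact hom (by rwa [← hroot, ← heq]) (hroot ▸ heq.symm)
    · exact hF (hadj w hw hwm) (heq.trans (hshift w hw hwm))
  refine ⟨F', hF.of_eqOn_compl hcompl (fun v hv w hw hvw heq => ?_)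
    (fun v hv w hw hvw heq => ?_), hcompl, hroot,
    fun v hv hvm => hshift v hv hvm ▸ hcolored v hv hvm⟩
  · obtain rfl | hvm := eq_or_ne v m
    · by_contra hne
      exact hw (hoT (hroot ▸ hne) w hvw (heq.symm.trans hroot))
    · exact absurd (hconflict v hv hvm w hvw (heq.symm.trans (hshift v hv hvm))) hw
  · obtain hd | hd := hG.dist_eq_dist_add_one_of_adj_of_reachable m hvw (hreachable v hv)
    · exact hedge v hv w hw hvw hd heq
    · exact heq ▸ hedge w hw v hv hvw.symm hd heq.symm

/-- Along the path `p` the hole at its start can be moved to its end by shifting the colours of the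
path by one step, without producing a conflict off the path. -/
def IsShiftPath (F : V → Option κ) {h m : V} (p : G.Walk h m) : Prop :=
  p.IsPath ∧ F h = none ∧ ∀ d ∈ p.darts, F d.snd ≠ none ∧
    ∀ z, G.Adj d.fst z → F z = F d.snd → z ∈ p.support

variable {h h' : V} {p : G.Walk h m} {B : Finset V}

theorem IsShiftPath.nil (hh : F h = none) : IsShiftPath F (.nil : G.Walk h h) :=
  ⟨.nil, hh, by simp⟩

theorem IsShiftPath.isShiftable (hp : IsShiftPath F p) (hG : G.IsAcyclic) :
    IsShiftable G F m {v | v ∈ p.support} := by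
  intro x hx hxm
  obtain ⟨d, hd, rfl⟩ := exists_dart_fst_eq p hx hxm
  exact ⟨d.snd, p.dart_snd_mem_support_of_mem_darts hd, d.adj,
    dist_fst_eq_dist_snd_add_one hG hp.1 hd, hp.2.2 d hd⟩

theorem IsShiftPath.isImprovable_of_color (hp : IsShiftPath F p) (hG : G.IsAcyclic)
    (hF : IsPartialColoring G F) (hpB : ∀ v ∈ p.support, v ∈ B) {c : κ} (hcm : some c ≠ F m)
    (hc : ∀ z, G.Adj m z → F z = some c → z ∈ p.support) : IsImprovable G B F := by
  obtain ⟨F', hF', hcompl, hroot, hcolored⟩ := (hp.isShiftable hG).exists_shift hG hF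
    p.end_mem_support (some c) (fun _ => hcm) (fun _ => hc)
  have hsupport (v) (hv : v ∈ p.support) : F' v ≠ none := by
    obtain rfl | hvm := eq_or_ne v m
    · simp [hroot]
    · exact hcolored v hv hvm
  refine ⟨F', hF', fun v hv => hcompl v (hv ∘ hpB v), Finset.card_lt_card ?_⟩
  refine (Finset.ssubset_iff_of_subset fun v hv => ?_).mpr ⟨h, ?_, ?_⟩
  · rw [Finset.mem_filter] at hv ⊢
    exact ⟨hv.1, hcompl v (fun h => hsupport v h hv.2) ▸ hv.2⟩
  · simp [hpB h p.start_mem_support, hp.2.1]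
  · simp [hsupport h p.start_mem_support]

theorem IsShiftPath.isImprovable_of_ne {p' : G.Walk h' m} (hp : IsShiftPath F p)
    (hp' : IsShiftPath F p') (hne : h ≠ h') (hG : G.IsAcyclic) (hF : IsPartialColoring G F)
    (hpB : ∀ v ∈ p.support, v ∈ B) (hpB' : ∀ v ∈ p'.support, v ∈ B) : IsImprovable G B F := by
  classical
  obtain ⟨F', hF', hcompl, -, hcolored⟩ :=
    ((hp.isShiftable hG).union (hp'.isShiftable hG)).exists_shift hG hF
      (.inl p.end_mem_support) none (by simp) (by simp)
  refine ⟨F', hF', fun v hv => hcompl v (not_or.mpr ⟨hv ∘ hpB v, hv ∘ hpB' v⟩), ?_⟩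
  set holes := {v ∈ B | F v = none}
  have hh : h ∈ holes := by simp [holes, hpB h p.start_mem_support, hp.2.1]
  have hh' : h' ∈ holes := by simp [holes, hpB' h' p'.start_mem_support, hp'.2.1]
  have hsubset : {v ∈ B | F' v = none} ⊆ insert m ((holes.erase h).erase h') := by
    intro v hv
    rw [Finset.mem_filter] at hv
    by_cases hvm : v = m
    · simp [hvm]
    · have hvT : v ∉ {v | v ∈ p.support} ∪ {v | v ∈ p'.support} :=
        fun h => hcolored v h hvm hv.2
      have hvh : v ≠ h := fun h => hvT (.inl (h ▸ p.start_mem_support))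
      have hvh' : v ≠ h' := fun h => hvT (.inr (h ▸ p'.start_mem_support))
      simp [holes, hvm, hvh, hvh', hv.1, ← hcompl v hvT, hv.2]
  have hcard : #((holes.erase h).erase h') + 1 + 1 = #holes := by
    rw [Finset.card_erase_add_one (Finset.mem_erase.mpr ⟨hne.symm, hh'⟩),
      Finset.card_erase_add_one hh]
  have := Finset.card_le_card hsubset
  have := Finset.card_insert_le m ((holes.erase h).erase h')
  lia

theorem IsShiftPath.concat (hp : IsShiftPath F p) {z : V} (hmz : G.Adj m z) (hz : F z ≠ none)
    (hzp : z ∉ p.support) (huniq : ∀ w, G.Adj m w → F w = F z → w ∉ p.support → w = z) :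
    IsShiftPath F (p.concat hmz) := by
  refine ⟨hp.1.concat hzp hmz, hp.2.1, fun d hd => ?_⟩
  simp only [SimpleGraph.Walk.support_concat, SimpleGraph.Walk.darts_concat,
    List.concat_eq_append, List.mem_append, List.mem_singleton] at hd ⊢
  obtain hd | rfl := hd
  · exact ⟨(hp.2.2 d hd).1, fun w hw hwd => .inl ((hp.2.2 d hd).2 w hw hwd)⟩
  · refine ⟨hz, fun w hw hwz => ?_⟩
    by_cases hwp : w ∈ p.support
    · exact .inl hwp
    · exact .inr (huniq w hw hwz hwp)

theorem IsShiftPath.map {V' : Type*} {G' : SimpleGraph V'} {F' : V' → Option κ} (φ : G ≃g G')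
    (hφ : ∀ v, F' (φ v) = F v) (hp : IsShiftPath F p) : IsShiftPath F' (p.map φ.toHom) := by
  refine ⟨hp.1.map φ.injective, (hφ h).trans hp.2.1, fun d hd => ?_⟩
  rw [SimpleGraph.Walk.darts_map, List.mem_map] at hd
  obtain ⟨d, hd, rfl⟩ := hd
  refine ⟨fun hnone => (hp.2.2 d hd).1 ((hφ d.snd).symm.trans hnone), fun z hz hcol => ?_⟩
  obtain ⟨z, rfl⟩ := φ.surjective z
  rw [SimpleGraph.Walk.support_map]
  refine List.mem_map_of_mem ((hp.2.2 d hd).2 z (φ.map_adj_iff.mp hz) ?_)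
  exact (hφ z).symm.trans (hcol.trans (hφ d.snd))

theorem measurableSet_isShiftPath {X : Type*} [MeasurableSpace X] [MeasurableSpace (Option κ)]
    [MeasurableSingletonClass (Option κ)] [Countable κ] [G.LocallyFinite] {F : X → V → Option κ}
    (hF : ∀ v, Measurable fun x => F x v) (p : G.Walk h m) :
    MeasurableSet {x | IsShiftPath (F x) p} := by
  have heq (v w : V) : MeasurableSet {x | F x v = F x w} := measurableSet_eq_fun (hF v) (hF w)
  have hnone (v : V) : MeasurableSet {x | F x v = none} := hF v (measurableSet_singleton none)
  simp only [IsShiftPath, Set.ofPred_and, Set.ofPred_forall]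
  refine .inter (.const _) <| (hnone h).inter <|
    .biInter (List.finite_toSet p.darts).countable fun d _ => (hnone d.snd).compl.inter ?_
  exact .biInter (G.neighborSet d.fst).to_countable fun z _ => (heq z d.snd).imp (.const _)

theorem measurableSet_exists_isShiftPath {X : Type*} [MeasurableSpace X]
    [MeasurableSpace (Option κ)] [MeasurableSingletonClass (Option κ)] [Countable κ]
    [G.LocallyFinite] (hG : G.IsAcyclic) {F : X → V → Option κ}
    (hF : ∀ v, Measurable fun x => F x v) (h m : V) (n : ℕ) :
    MeasurableSet {x | ∃ p : G.Walk h m, IsShiftPath (F x) p ∧ p.length < n} := by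
  by_cases hpath : ∃ p : G.Walk h m, p.IsPath ∧ p.length < n
  · obtain ⟨p, hp, hn⟩ := hpath
    convert measurableSet_isShiftPath hF p using 3 with x
    refine ⟨fun ⟨q, hq, _⟩ => ?_, fun hpx => ⟨p, hpx, hn⟩⟩
    rwa [eq_of_isPath_of_isAcyclic hG hp hq.1]
  · convert MeasurableSet.empty using 1
    exact Set.eq_empty_of_forall_notMem fun x ⟨p, hp, hn⟩ => hpath ⟨p, hp.1, hn⟩

variable [G.LocallyFinite] [Fintype κ]

theorem IsShiftPath.exists_color_card_lt_two (hp : IsShiftPath F p)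
    (hdeg : G.degree m + 2 ≤ 2 * Fintype.card κ) :
    ∃ c : κ, some c ≠ F m ∧
      {z | z ∉ p.support ∧ G.Adj m z ∧ F z = some c}.Subsingleton := by
  classical
  set outer := {z ∈ G.neighborFinset m | z ∉ p.support}
  have hcard : #outer < #({none, F m}ᶜ : Finset (Option κ)) * 2 := by
    rw [Finset.card_compl, Fintype.card_option]
    by_cases hnil : p.Nil
    · obtain rfl := hnil.eq
      have : #outer ≤ G.degree h := Finset.card_filter_le _ _
      simp [hp.2.1]
      lia
    · have : #outer < G.degree m := Finset.card_lt_card <| Finset.filter_ssubset.mpr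
        ⟨p.penultimate, by simpa using (p.adj_penultimate hnil).symm,
          by simp [p.getVert_mem_support]⟩
      have := Finset.card_le_two (a := none) (b := F m)
      lia
  obtain ⟨o, ho, hfiber⟩ := Finset.exists_card_fiber_lt_of_card_lt_mul (f := F) hcard
  rw [Finset.mem_compl, Finset.mem_insert, Finset.mem_singleton, not_or] at ho
  obtain ⟨c, rfl⟩ := Option.ne_none_iff_exists'.mp ho.1
  refine ⟨c, ho.2, fun z hz w hw => Finset.card_le_one.mp (Nat.le_of_lt_succ hfiber) z ?_ w ?_⟩
  · simp [outer, hz.1, hz.2.1, hz.2.2]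
  · simp [outer, hw.1, hw.2.1, hw.2.2]

theorem IsShiftPath.exists_concat (hp : IsShiftPath F p) (hG : G.IsAcyclic)
    (hF : IsPartialColoring G F) (hdeg : G.degree m + 2 ≤ 2 * Fintype.card κ)
    (hpB : ∀ v ∈ p.support, v ∈ B) (hB : ¬IsImprovable G B F) :
    ∃ (z : V) (hmz : G.Adj m z), IsShiftPath F (p.concat hmz) := by
  obtain ⟨c, hcm, hc⟩ := hp.exists_color_card_lt_two hdeg
  by_cases hfree : ∀ z, G.Adj m z → F z = some c → z ∈ p.support
  · exact absurd (hp.isImprovable_of_color hG hF hpB hcm hfree) hB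
  · push Not at hfree
    obtain ⟨z, hmz, hzc, hzp⟩ := hfree
    exact ⟨z, hmz, hp.concat hmz (by simp [hzc]) hzp fun w hmw hwz hwp =>
      hc ⟨hwp, hmw, hwz.trans hzc⟩ ⟨hzp, hmz, hzc⟩⟩

theorem exists_isShiftPath_of_not_isImprovable (hG : G.IsAcyclic) (hF : IsPartialColoring G F)
    (hdeg : ∀ v, G.degree v + 2 ≤ 2 * Fintype.card κ) (hh : F h = none) {n : ℕ}
    (hball : G.ball h n ⊆ B) (hB : ¬IsImprovable G B F) {k : ℕ} (hk : k ≤ n) :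
    ∃ (m : V) (p : G.Walk h m), IsShiftPath F p ∧ p.length = k := by
  induction k with
  | zero => exact ⟨h, .nil, .nil hh, rfl⟩
  | succ k ih =>
    obtain ⟨m, p, hp, rfl⟩ := ih (by lia)
    obtain ⟨z, hmz, hpz⟩ := hp.exists_concat hG hF (hdeg m)
      (fun v hv => hball (mem_ball_of_mem_support hk hv)) hB
    exact ⟨z, p.concat hmz, hpz, p.length_concat hmz⟩

end PartialColorings

section MeasurePreservingActions

variable {X : Type*} [MeasurableSpace X] {μ : Measure X}

theorem exists_div_card_le_measure_inter_fiber {ι : Type*} [Finite ι] (P : X → ι) {I : Set X}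
    (hI : μ I ≠ 0) : ∃ x ∈ I, μ I / Nat.card ι ≤ μ (I ∩ P ⁻¹' {P x}) := by
  have := Fintype.ofFinite ι
  obtain ⟨x, -⟩ := nonempty_of_measure_ne_zero hI
  have : Nonempty ι := ⟨P x⟩
  obtain ⟨i, hi⟩ := Finite.exists_max fun i => μ (I ∩ P ⁻¹' {i})
  have hle : μ I / Nat.card ι ≤ μ (I ∩ P ⁻¹' {i}) := by
    rw [Nat.card_eq_fintype_card]
    refine ENNReal.div_le_of_le_mul' ?_
    calc μ I = μ (⋃ i, I ∩ P ⁻¹' {i}) := by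
          rw [← Set.inter_iUnion, ← Set.preimage_iUnion, Set.iUnion_of_singleton,
            Set.preimage_univ, Set.inter_univ]
      _ ≤ ∑ i, μ (I ∩ P ⁻¹' {i}) := measure_iUnion_fintype_le μ _
      _ ≤ Fintype.card ι * μ (I ∩ P ⁻¹' {i}) := by
          simpa using Finset.sum_le_card_nsmul Finset.univ _ _ fun j _ => hi j
  obtain ⟨x, hx, rfl⟩ := nonempty_of_measure_ne_zero
    ((ENNReal.div_pos hI (ENNReal.natCast_ne_top _)).trans_le hle).ne'
  exact ⟨x, hx, hle⟩

variable {Γ : Type*} [Group Γ] [MulAction Γ X] [MeasurableConstSMul Γ X]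

theorem tendsto_measure_smul_eq [IsFiniteMeasure μ] {e : X → ℕ → Bool} (he : Measurable e)
    (hinj : e.Injective) {γ : Γ} (hγ : ∀ᵐ x ∂μ, γ • x ≠ x) :
    Filter.Tendsto (fun n => μ {x | ∀ i : Fin n, e (γ • x) i = e x i}) Filter.atTop (nhds 0) := by
  have hmeas (n : ℕ) : MeasurableSet {x | ∀ i : Fin n, e (γ • x) i = e x i} := by
    rw [Set.ofPred_forall]
    exact .iInter fun i => measurableSet_eq_fun
      ((measurable_pi_apply _).comp (he.comp (measurable_const_smul γ)))
      ((measurable_pi_apply _).comp he)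
  have hanti : Antitone fun n : ℕ => {x | ∀ i : Fin n, e (γ • x) i = e x i} :=
    fun n k hnk x hx i => hx (i.castLE hnk)
  have hnull : μ (⋂ n : ℕ, {x | ∀ i : Fin n, e (γ • x) i = e x i}) = 0 := by
    refine measure_mono_null (fun x hx => ?_) (ae_iff.mp hγ)
    exact not_not.mpr (hinj (funext fun i => Set.mem_iInter.mp hx (i + 1) (Fin.last i)))
  exact hnull ▸ tendsto_measure_iInter_atTop (fun n => (hmeas n).nullMeasurableSet) hanti
    ⟨0, measure_ne_top μ _⟩

theorem exists_measurable_measure_smul_eq_lt [MeasurableSpace.CountablySeparated X]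
    [IsFiniteMeasure μ] {D : Finset Γ} (hD : ∀ γ ∈ D, ∀ᵐ x ∂μ, γ • x ≠ x)
    {η : ENNReal} (hη : η ≠ 0) :
    ∃ (n : ℕ) (q : X → Fin n → Bool), Measurable q ∧ μ {x | ∃ γ ∈ D, q (γ • x) = q x} < η := by
  obtain ⟨e, he, hinj⟩ := MeasurableSpace.measurable_injection_nat_bool_of_countablySeparated X
  have hlim := tendsto_finsetSum D fun γ hγ => tendsto_measure_smul_eq he hinj (hD γ hγ)
  rw [Finset.sum_const_zero] at hlim
  obtain ⟨n, hn⟩ := (hlim.eventually_lt_const (pos_iff_ne_zero.mpr hη)).exists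
  refine ⟨n, fun x i => e x i, by fun_prop, ?_⟩
  calc μ {x | ∃ γ ∈ D, (fun i : Fin n => e (γ • x) i) = fun i : Fin n => e x i}
      ≤ μ (⋃ γ ∈ D, {x | ∀ i : Fin n, e (γ • x) i = e x i}) :=
        measure_mono fun x ⟨γ, hγ, hx⟩ => Set.mem_biUnion hγ (congrFun hx)
    _ ≤ ∑ γ ∈ D, μ {x | ∀ i : Fin n, e (γ • x) i = e x i} := measure_biUnion_finset_le D _
    _ < η := hn

theorem exists_pairwiseDisjoint_preimage_smul_subset_fiber [MeasurableSpace.CountablySeparated X]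
    [IsFiniteMeasure μ] (hfree : ∀ γ : Γ, γ ≠ 1 → ∀ᵐ x ∂μ, γ • x ≠ x) (A : Finset Γ)
    (ι : Type*) [Finite ι] [MeasurableSpace ι] [MeasurableSingletonClass ι] {δ : ENNReal}
    (hδ : δ ≠ 0) :
    ∃ δ' ≠ 0, ∀ P : X → ι, Measurable P → ∀ I : Set X, δ ≤ μ I → ∃ x ∈ I, ∃ C ⊆ P ⁻¹' {P x},
      MeasurableSet C ∧ (A : Set Γ).PairwiseDisjoint (fun γ => (γ • ·) ⁻¹' C) ∧ δ' ≤ μ C := by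
  classical
  set D : Finset Γ := ((A ×ˢ A).image fun γ => γ.2 * γ.1⁻¹).erase 1
  obtain ⟨n, q, hq, hsmall⟩ := exists_measurable_measure_smul_eq_lt (D := D)
    (fun γ hγ => hfree γ (Finset.ne_of_mem_erase hγ)) (ENNReal.half_pos hδ).ne'
  set bad : Set X := {x | ∃ γ ∈ D, q (γ • x) = q x}
  have hbad : MeasurableSet bad := by
    have : bad = ⋃ γ ∈ D, {x | q (γ • x) = q x} := by ext; simp [bad]
    rw [this]
    exact D.measurableSet_biUnion fun γ _ =>
      measurableSet_eq_fun (hq.comp (measurable_const_smul γ)) hq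
  refine ⟨δ / 2 / Nat.card (ι × (Fin n → Bool)),
    (ENNReal.div_pos (ENNReal.half_pos hδ).ne' (ENNReal.natCast_ne_top _)).ne',
    fun P hP I hI => ?_⟩
  have hlarge : δ / 2 ≤ μ (I \ bad) := by
    by_contra! hlt
    refine hI.not_gt ?_
    calc μ I ≤ μ (I \ bad) + μ bad :=
          (measure_mono (Set.subset_sdiff_union I bad)).trans (measure_union_le _ _)
      _ < δ / 2 + δ / 2 := ENNReal.add_lt_add hlt hsmall
      _ = δ := ENNReal.add_halves δ
  obtain ⟨x, ⟨hxI, -⟩, hx⟩ := exists_div_card_le_measure_inter_fiber (fun x => (P x, q x))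
    ((ENNReal.half_pos hδ).trans_le hlarge).ne'
  refine ⟨x, hxI, (fun x => (P x, q x)) ⁻¹' {(P x, q x)} \ bad,
    fun y hy => congrArg Prod.fst hy.1,
    ((hP.prodMk hq) (measurableSet_singleton _)).diff hbad, fun γ hγ γ' hγ' hne => ?_,
    (ENNReal.div_le_div_right hlarge _).trans
      (hx.trans (measure_mono fun y hy => ⟨hy.2, hy.1.2⟩))⟩
  refine Set.disjoint_left.mpr fun y hy hy' => hy.2 ⟨γ' * γ⁻¹, ?_, ?_⟩
  · exact Finset.mem_erase.mpr ⟨fun h => hne (mul_inv_eq_one.mp h).symm,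
      Finset.mem_image.mpr ⟨(γ, γ'), Finset.mem_product.mpr ⟨hγ, hγ'⟩, rfl⟩⟩
  · rw [smul_smul, inv_mul_cancel_right]
    exact congrArg Prod.snd (hy'.1.trans hy.1.symm)

variable [SMulInvariantMeasure Γ X μ]

open scoped Classical in
/-- Mass transport: if `γ • x ∈ W γ` means that `x` sends a unit of mass to `γ • x`, then points of
`H` send at least `N` units, whereas points outside of `I` receive at most one. -/
theorem mul_measure_le_of_card_le_one (B : Finset Γ) {W : Γ → Set X}
    (hW : ∀ γ, MeasurableSet (W γ)) {H I : Set X} {N : ℕ}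
    (hsend : ∀ x ∈ H, N ≤ #{γ ∈ B | γ • x ∈ W γ}) (hreceive : ∀ x ∉ I, #{γ ∈ B | x ∈ W γ} ≤ 1) :
    N * μ H ≤ μ Set.univ + #B * μ I := by
  set sent : X → ENNReal := fun x => ∑ γ ∈ B, ((γ • ·) ⁻¹' W γ).indicator 1 x
  set received : X → ENNReal := fun x => ∑ γ ∈ B, (W γ).indicator 1 x
  have hW' (γ : Γ) : MeasurableSet ((γ • ·) ⁻¹' W γ : Set X) := measurable_const_smul γ (hW γ)
  have hsent_meas : Measurable sent :=
    Finset.measurable_sum B fun γ _ => measurable_one.indicator (hW' γ)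
  have hsent (x) (hx : x ∈ H) : (N : ENNReal) ≤ sent x := by
    have : sent x = #{γ ∈ B | γ • x ∈ W γ} := by simp [sent, Set.indicator_apply]
    exact this ▸ Nat.cast_le.mpr (hsend x hx)
  have hreceived (x) :
      received x ≤ 1 + (toMeasurable μ I).indicator (fun _ => (#B : ENNReal)) x := by
    have hcard : received x = #{γ ∈ B | x ∈ W γ} := by simp [received, Set.indicator_apply]
    rw [hcard]
    by_cases hx : x ∈ toMeasurable μ I
    · rw [Set.indicator_of_mem hx]
      exact le_add_left (Nat.cast_le.mpr (Finset.card_filter_le _ _))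
    · rw [Set.indicator_of_notMem hx, add_zero]
      exact_mod_cast hreceive x fun h => hx (subset_toMeasurable μ I h)
  calc N * μ H ≤ N * μ {x | N ≤ sent x} := by gcongr; exact hsent
    _ ≤ ∫⁻ x, sent x ∂μ := mul_meas_ge_le_lintegral hsent_meas _
    _ = ∑ γ ∈ B, μ (W γ) := by
      rw [lintegral_finsetSum _ fun γ _ => measurable_one.indicator (hW' γ)]
      simp [hW', measure_preimage_smul]
    _ = ∫⁻ x, received x ∂μ := by
      rw [lintegral_finsetSum _ fun γ _ => measurable_one.indicator (hW γ)]
      simp [hW]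
    _ ≤ ∫⁻ x, 1 + (toMeasurable μ I).indicator (fun _ => (#B : ENNReal)) x ∂μ :=
      lintegral_mono hreceived
    _ = μ Set.univ + #B * μ I := by
      rw [lintegral_add_left measurable_const, lintegral_one,
        lintegral_indicator_const (measurableSet_toMeasurable μ I), measure_toMeasurable]

theorem measure_inter_biUnion_preimage_smul {B : Finset Γ} {C H : Set X} (hC : MeasurableSet C)
    (hdisj : (B : Set Γ).PairwiseDisjoint fun γ => (γ • ·) ⁻¹' C) {P : Γ → Prop}
    [DecidablePred P] (hP : ∀ γ ∈ B, ∀ x, γ • x ∈ C → (x ∈ H ↔ P γ)) :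
    μ (H ∩ ⋃ γ ∈ B, (γ • ·) ⁻¹' C) = #{γ ∈ B | P γ} * μ C := by
  have hunion : H ∩ ⋃ γ ∈ B, (γ • ·) ⁻¹' C = ⋃ γ ∈ ({γ ∈ B | P γ} : Finset Γ), (γ • ·) ⁻¹' C := by
    ext x
    simp only [Set.mem_inter_iff, Set.mem_iUnion₂, Set.mem_preimage, Finset.mem_filter]
    constructor
    · rintro ⟨hx, γ, hγ, hγx⟩
      exact ⟨γ, ⟨hγ, (hP γ hγ x hγx).mp hx⟩, hγx⟩
    · rintro ⟨γ, ⟨hγ, hPγ⟩, hγx⟩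
      exact ⟨(hP γ hγ x hγx).mpr hPγ, γ, hγ, hγx⟩
  rw [hunion, measure_biUnion_finset (hdisj.subset (Finset.filter_subset _ _))
    fun γ _ => measurable_const_smul γ hC]
  simp [measure_preimage_smul]

end MeasurePreservingActions

section CayleyGraph

open SimpleGraph (mulCayley)

variable {Γ : Type*} [Group Γ]

/-- Left multiplication by a group element as an automorphism of the Cayley graph. -/
def mulCayleyMulLeft (S : Set Γ) (g : Γ) : mulCayley S ≃g mulCayley S :=
  ⟨Equiv.mulLeft g, SimpleGraph.mulCayley_adj_mul_iff_right⟩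

theorem neighborSet_mulCayley_subset (S : Set Γ) (v : Γ) :
    (mulCayley S).neighborSet v ⊆ (v * ·) '' S ∪ (v * ·⁻¹) '' S := by
  intro w hw
  obtain ⟨-, h | h⟩ := (SimpleGraph.mulCayley_adj S v w).mp hw
  · exact .inl ⟨_, h, by group⟩
  · exact .inr ⟨_, h, by group⟩

variable (S : Set Γ) [Finite S]

noncomputable instance locallyFiniteMulCayley : (mulCayley S).LocallyFinite := fun v =>
  ((S.toFinite.image _ |>.union (S.toFinite.image _)).subset
    (neighborSet_mulCayley_subset S v)).fintype

theorem degree_mulCayley_le (v : Γ) : (mulCayley S).degree v ≤ 2 * S.ncard := by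
  calc (mulCayley S).degree v = ((mulCayley S).neighborSet v).ncard :=
        ((mulCayley S).neighborSet v).ncard_eq_toFinset_card'.symm
    _ ≤ ((v * ·) '' S ∪ (v * ·⁻¹) '' S).ncard :=
        Set.ncard_le_ncard (neighborSet_mulCayley_subset S v)
          (S.toFinite.image _ |>.union (S.toFinite.image _))
    _ ≤ ((v * ·) '' S).ncard + ((v * ·⁻¹) '' S).ncard := Set.ncard_union_le _ _
    _ ≤ S.ncard + S.ncard := add_le_add Set.ncard_image_le Set.ncard_image_le
    _ = 2 * S.ncard := (two_mul _).symm

end CayleyGraph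

section EquivariantColorings

open SimpleGraph (mulCayley)

variable {Γ X κ : Type*} [Group Γ] [MulAction Γ X] {S : Set Γ} {f : X → Option κ}

/-- The labelling of the group which a labelling `f` of a `Γ`-space induces along the orbit of `x`.
The inverse makes left translation of the group correspond to moving `x` along its orbit. -/
def orbitLabeling {L : Type*} (f : X → L) (x : X) (γ : Γ) : L :=
  f (γ⁻¹ • x)

theorem orbitLabeling_smul {L : Type*} (f : X → L) (g : Γ) (x : X) (γ : Γ) :
    orbitLabeling f (g • x) (g * γ) = orbitLabeling f x γ := by
  simp [orbitLabeling, mul_smul]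

theorem orbitLabeling_one {L : Type*} (f : X → L) (x : X) : orbitLabeling f x (1 : Γ) = f x := by
  simp [orbitLabeling]

/-- A measurable function on a `Γ`-space inducing a partial colouring of the Cayley graph along
every orbit. -/
structure IsMeasurablePartialColoring [MeasurableSpace X] [MeasurableSpace (Option κ)] (S : Set Γ)
    (f : X → Option κ) : Prop where
  measurable : Measurable f
  isPartialColoring : ∀ x, IsPartialColoring (mulCayley S) (orbitLabeling (Γ := Γ) f x)

open scoped Classical in
/-- The labelling which equals `f` except that for `c ∈ C` the point `γ⁻¹ • c` is labelled
`F' γ` for every `γ ∈ B`. Where the sets `γ⁻¹ • C` overlap, the choice between them is arbitrary. -/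
noncomputable def patch {L : Type*} (C : Set X) (B : Finset Γ) (F' : Γ → L) (f : X → L) (x : X) :
    L :=
  if h : ∃ γ ∈ B, γ • x ∈ C then F' h.choose else f x

section Patch

variable {L : Type*} {C : Set X} {A B : Finset Γ} {F' : Γ → L} {g : X → L}

theorem patch_of_notMem {x : X} (hx : x ∉ ⋃ γ ∈ B, (γ • ·) ⁻¹' C) :
    patch C B F' g x = g x :=
  dif_neg fun ⟨_, hγ, hγx⟩ => hx (Set.mem_biUnion hγ hγx)

theorem patch_of_smul_mem (hBA : B ⊆ A)
    (hdisj : (A : Set Γ).PairwiseDisjoint fun γ => (γ • ·) ⁻¹' C) {x : X} {γ : Γ} (hγA : γ ∈ A)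
    (hγx : γ • x ∈ C) (hg : γ ∉ B → g x = F' γ) : patch C B F' g x = F' γ := by
  by_cases h : ∃ β ∈ B, β • x ∈ C
  · have hchoose : h.choose = γ :=
      hdisj.elim_set (hBA h.choose_spec.1) hγA x h.choose_spec.2 hγx
    rw [patch, dif_pos h, hchoose]
  · rw [patch, dif_neg h, hg fun hγB => h ⟨γ, hγB, hγx⟩]

theorem measurable_patch [MeasurableSpace X] [MeasurableConstSMul Γ X] [MeasurableSpace L]
    (hC : MeasurableSet C)
    (hdisj : (B : Set Γ).PairwiseDisjoint fun γ => (γ • ·) ⁻¹' C) (hg : Measurable g) :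
    Measurable (patch C B F' g) := by
  have hC' (γ : Γ) : MeasurableSet ((γ • ·) ⁻¹' C : Set X) := measurable_const_smul γ hC
  intro s hs
  have hpreimage : patch C B F' g ⁻¹' s = (⋃ γ ∈ B, (γ • ·) ⁻¹' C ∩ {_x | F' γ ∈ s}) ∪
      (g ⁻¹' s \ ⋃ γ ∈ B, (γ • ·) ⁻¹' C) := by
    ext x
    by_cases hx : x ∈ ⋃ γ ∈ B, (γ • ·) ⁻¹' C
    · obtain ⟨β, hβ, hβx⟩ := Set.mem_iUnion₂.mp hx
      have hvalue (γ) (hγ : γ ∈ B) (hγx : γ • x ∈ C) : patch C B F' g x = F' γ :=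
        patch_of_smul_mem subset_rfl hdisj hγ hγx (absurd hγ)
      simp only [Set.mem_preimage, Set.mem_union, Set.mem_iUnion₂, Set.mem_inter_iff, Set.mem_sdiff,
        hx, not_true, and_false, or_false]
      exact ⟨fun h => ⟨β, hβ, hβx, hvalue β hβ hβx ▸ h⟩,
        fun ⟨γ, hγ, hγx, h⟩ => (hvalue γ hγ hγx).symm ▸ h⟩
    · have hx' : ∀ γ ∈ B, γ • x ∉ C := fun γ hγ hγx => hx (Set.mem_biUnion hγ hγx)
      simp +contextual [patch_of_notMem hx, hx']
  rw [hpreimage]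
  exact (B.measurableSet_biUnion fun γ _ => (hC' γ).inter (.const _)).union
    ((hg hs).diff (B.measurableSet_biUnion fun γ _ => hC' γ))

theorem isPartialColoring_patch {F F' : Γ → Option κ}
    (hf : ∀ x, IsPartialColoring (mulCayley S) (orbitLabeling (Γ := Γ) f x)) (hBA : B ⊆ A)
    (hA : ∀ β ∈ B, ∀ γ, (mulCayley S).Adj β γ → γ ∈ A)
    (hdisj : (A : Set Γ).PairwiseDisjoint fun γ => (γ • ·) ⁻¹' C)
    (hpattern : ∀ c ∈ C, ∀ γ ∈ A, orbitLabeling f c γ = F γ)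
    (hF' : IsPartialColoring (mulCayley S) F') (hcompl : ∀ γ ∉ B, F' γ = F γ) (x : X) :
    IsPartialColoring (mulCayley S) (orbitLabeling (Γ := Γ) (patch C B F' f) x) := by
  have hpattern' (c) (hc : c ∈ C) (γ) (hγ : γ ∈ A) :
      orbitLabeling (patch C B F' f) c γ = F' γ :=
    patch_of_smul_mem hBA hdisj hγ (by simpa using hc) fun hγB =>
      (hpattern c hc γ hγ).trans (hcompl γ hγB).symm
  have hnear (v w : Γ) (hvw : (mulCayley S).Adj v w) (hv : v⁻¹ • x ∈ ⋃ γ ∈ B, (γ • ·) ⁻¹' C)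
      (heq : orbitLabeling (patch C B F' f) x v = orbitLabeling (patch C B F' f) x w) :
      orbitLabeling (patch C B F' f) x v = none := by
    obtain ⟨β, hβ, hc⟩ := Set.mem_iUnion₂.mp hv
    rw [Set.mem_preimage, ← mul_smul] at hc
    have hadj : (mulCayley S).Adj β (β * v⁻¹ * w) := by
      rw [← SimpleGraph.mulCayley_adj_mul_iff_right (d := β * v⁻¹), inv_mul_cancel_right] at hvw
      exact hvw
    rw [← orbitLabeling_smul _ (β * v⁻¹) x v, ← orbitLabeling_smul _ (β * v⁻¹) x w,
      inv_mul_cancel_right, hpattern' _ hc β (hBA hβ), hpattern' _ hc _ (hA β hβ _ hadj)] at heq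
    rw [← orbitLabeling_smul _ (β * v⁻¹) x v, inv_mul_cancel_right, hpattern' _ hc β (hBA hβ)]
    exact hF' hadj heq
  intro v w hvw heq
  by_cases hv : v⁻¹ • x ∈ ⋃ γ ∈ B, (γ • ·) ⁻¹' C
  · exact hnear v w hvw hv heq
  by_cases hw : w⁻¹ • x ∈ ⋃ γ ∈ B, (γ • ·) ⁻¹' C
  · exact heq.trans (hnear w v hvw.symm hw heq.symm)
  · rw [orbitLabeling, patch_of_notMem hv] at heq ⊢
    rw [orbitLabeling, patch_of_notMem hw] at heq
    exact hf x hvw heq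

end Patch

section Measure

variable [MeasurableSpace X] [MeasurableConstSMul Γ X] {μ : Measure X} [SMulInvariantMeasure Γ X μ]
  [MeasurableSpace (Option κ)]

theorem IsMeasurablePartialColoring.exists_measure_add_le (hf : IsMeasurablePartialColoring S f)
    {A B : Finset Γ} (hBA : B ⊆ A) (hA : ∀ β ∈ B, ∀ γ, (mulCayley S).Adj β γ → γ ∈ A) {C : Set X}
    (hC : MeasurableSet C) (hdisj : (A : Set Γ).PairwiseDisjoint fun γ => (γ • ·) ⁻¹' C)
    {F : Γ → Option κ} (hF : IsImprovable (mulCayley S) B F)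
    (hpattern : ∀ c ∈ C, ∀ γ ∈ A, orbitLabeling f c γ = F γ) :
    ∃ f' : X → Option κ, IsMeasurablePartialColoring S f' ∧
      μ (f' ⁻¹' {none}) + μ C ≤ μ (f ⁻¹' {none}) := by
  classical
  obtain ⟨F', hF', hcompl, hcard⟩ := hF
  have hdisjB := hdisj.subset (Finset.coe_subset.mpr hBA)
  set U : Set X := ⋃ γ ∈ B, (γ • ·) ⁻¹' C
  have hU : MeasurableSet U := B.measurableSet_biUnion fun γ _ => measurable_const_smul γ hC
  set f' := patch C B F' f
  have hinside : μ (f ⁻¹' {none} ∩ U) = #{γ ∈ B | F γ = none} * μ C :=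
    measure_inter_biUnion_preimage_smul hC hdisjB fun γ hγ x hγx => by
      have := hpattern _ hγx γ (hBA hγ)
      rw [orbitLabeling, inv_smul_smul] at this
      simp [this]
  have hinside' : μ (f' ⁻¹' {none} ∩ U) = #{γ ∈ B | F' γ = none} * μ C :=
    measure_inter_biUnion_preimage_smul hC hdisjB fun γ hγ x hγx => by
      simp [f', patch_of_smul_mem subset_rfl hdisjB hγ hγx (absurd hγ)]
  have houtside : f' ⁻¹' {none} \ U = f ⁻¹' {none} \ U := by
    ext x
    simp +contextual [f', patch_of_notMem, U]
  refine ⟨f', ⟨measurable_patch hC hdisjB hf.measurable,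
    isPartialColoring_patch hf.isPartialColoring hBA hA hdisj hpattern hF' hcompl⟩, ?_⟩
  calc μ (f' ⁻¹' {none}) + μ C
      = (#{γ ∈ B | F' γ = none} + 1 : ℕ) * μ C + μ (f ⁻¹' {none} \ U) := by
        rw [← measure_inter_add_sdiff (f' ⁻¹' {none}) hU, hinside', houtside]
        push_cast
        ring
    _ ≤ #{γ ∈ B | F γ = none} * μ C + μ (f ⁻¹' {none} \ U) := by
        gcongr
        exact hcard
    _ = μ (f ⁻¹' {none}) := by rw [← hinside, measure_inter_add_sdiff _ hU]

end Measure

section ShiftPaths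

theorem exists_isShiftPath_smul {x : X} {h m : Γ} {N : ℕ} (g : Γ)
    (hp : ∃ p : (mulCayley S).Walk h m, IsShiftPath (orbitLabeling f x) p ∧ p.length < N) :
    ∃ p : (mulCayley S).Walk (g * h) (g * m),
      IsShiftPath (orbitLabeling f (g • x)) p ∧ p.length < N := by
  obtain ⟨p, hp, hN⟩ := hp
  exact ⟨p.map (mulCayleyMulLeft S g).toHom, hp.map _ (orbitLabeling_smul f g x),
    (p.length_map _).trans_lt hN⟩

variable [(mulCayley S).LocallyFinite] [Fintype κ] {B : Finset Γ} {N : ℕ}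

open scoped Classical in
theorem le_card_filter_exists_isShiftPath (hG : (mulCayley S).IsAcyclic)
    (hdeg : ∀ v, (mulCayley S).degree v + 2 ≤ 2 * Fintype.card κ) (hB : (mulCayley S).ball 1 N ⊆ B)
    {x : X} (hf : IsPartialColoring (mulCayley S) (orbitLabeling (Γ := Γ) f x)) (hx : f x = none)
    (himp : ¬IsImprovable (mulCayley S) B (orbitLabeling f x)) :
    N ≤ #{γ ∈ B | ∃ p : (mulCayley S).Walk γ 1,
      IsShiftPath (orbitLabeling f (γ • x)) p ∧ p.length < N} := by
  have hpath (k : ℕ) (hk : k < N) : ∃ (m : Γ) (p : (mulCayley S).Walk 1 m),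
      IsShiftPath (orbitLabeling f x) p ∧ p.length = k :=
    exists_isShiftPath_of_not_isImprovable hG hf hdeg ((orbitLabeling_one f x).trans hx) hB himp
      hk.le
  choose! m p hp hlength using hpath
  have hinj : Set.InjOn (fun k => (m k)⁻¹) (Finset.range N) := by
    intro j hj k hk hjk
    rw [Finset.mem_coe, Finset.mem_range] at hj hk
    rw [← hlength j hj, ← hlength k hk, length_eq_dist_of_isAcyclic hG (hp j hj).1,
      length_eq_dist_of_isAcyclic hG (hp k hk).1, inv_injective hjk]
  refine (Finset.card_range N).ge.trans <|
    Finset.card_le_card_of_injOn (fun k => (m k)⁻¹) (fun k hk => ?_) hinj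
  rw [Finset.mem_coe, Finset.mem_range] at hk
  obtain ⟨q, hq, hqN⟩ : ∃ q : (mulCayley S).Walk (m k)⁻¹ 1,
      IsShiftPath (orbitLabeling f ((m k)⁻¹ • x)) q ∧ q.length < N := by
    have := exists_isShiftPath_smul (m k)⁻¹ ⟨p k hk, hp k hk, (hlength k hk).trans_lt hk⟩
    rwa [mul_one, inv_mul_cancel] at this
  have hmem : (m k)⁻¹ ∈ (mulCayley S).ball 1 N :=
    mem_ball_of_mem_support (p := q.reverse) (by simpa using hqN) (by simp)
  simpa using ⟨hB hmem, q, hq, hqN⟩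

variable [MeasurableSpace X] [MeasurableConstSMul Γ X] {μ : Measure X} [SMulInvariantMeasure Γ X μ]
  [MeasurableSpace (Option κ)] [MeasurableSingletonClass (Option κ)]

/-- Every hole whose pattern is not improvable sends one unit of mass along shift paths of each
length less than `N`, and at most one of these units arrives at a point with such a pattern. -/
theorem IsMeasurablePartialColoring.mul_measure_none_le (hf : IsMeasurablePartialColoring S f)
    (hG : (mulCayley S).IsAcyclic)
    (hdeg : ∀ v, (mulCayley S).degree v + 2 ≤ 2 * Fintype.card κ)
    (hB : (mulCayley S).ball 1 N ⊆ B) :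
    N * μ (f ⁻¹' {none}) ≤
      μ Set.univ + (#B + N) * μ {x | IsImprovable (mulCayley S) B (orbitLabeling f x)} := by
  classical
  set I := {x | IsImprovable (mulCayley S) B (orbitLabeling f x)}
  have hmeas (γ : Γ) : Measurable fun x => orbitLabeling f x γ :=
    hf.measurable.comp (measurable_const_smul γ⁻¹)
  have hsupport {γ : Γ} {p : (mulCayley S).Walk γ 1} (hN : p.length < N) (v) (hv : v ∈ p.support) :
      v ∈ B :=
    hB <| mem_ball_of_mem_support (p := p.reverse) (by simpa using hN) (by simpa using hv)
  have htransport : N * μ (f ⁻¹' {none} \ I) ≤ μ Set.univ + #B * μ I := by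
    refine mul_measure_le_of_card_le_one B
      (measurableSet_exists_isShiftPath hG hmeas · 1 N)
      (fun x hx => le_card_filter_exists_isShiftPath hG hdeg hB (hf.isPartialColoring x) hx.1 hx.2)
      fun x hx => Finset.card_le_one.mpr fun γ hγ γ' hγ' => ?_
    obtain ⟨-, p, hp, hN⟩ := Finset.mem_filter.mp hγ
    obtain ⟨-, p', hp', hN'⟩ := Finset.mem_filter.mp hγ'
    by_contra hne
    exact hx <| hp.isImprovable_of_ne hp' hne hG (hf.isPartialColoring x) (hsupport hN)
      (hsupport hN')
  calc N * μ (f ⁻¹' {none})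
      ≤ N * (μ (f ⁻¹' {none} \ I) + μ I) := by
        gcongr
        exact (measure_mono fun x hx => (em (x ∈ I)).elim .inr fun h => .inl ⟨hx, h⟩).trans
          (measure_union_le _ _)
    _ ≤ μ Set.univ + #B * μ I + N * μ I := by rw [mul_add]; gcongr
    _ = μ Set.univ + (#B + N) * μ I := by ring

end ShiftPaths

section Descent

variable [MeasurableSpace X] [MeasurableSpace.CountablySeparated X] [MeasurableConstSMul Γ X]
  {μ : Measure X} [IsFiniteMeasure μ] [SMulInvariantMeasure Γ X μ]
  [MeasurableSpace (Option κ)] [MeasurableSingletonClass (Option κ)] [(mulCayley S).LocallyFinite]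

theorem exists_forall_exists_measure_none_add_le [Finite κ]
    (hfree : ∀ γ : Γ, γ ≠ 1 → ∀ᵐ x ∂μ, γ • x ≠ x) (B : Finset Γ) {δ : ENNReal} (hδ : δ ≠ 0) :
    ∃ δ' ≠ 0, ∀ f : X → Option κ, IsMeasurablePartialColoring S f →
      δ ≤ μ {x | IsImprovable (mulCayley S) B (orbitLabeling f x)} →
      ∃ f' : X → Option κ, IsMeasurablePartialColoring S f' ∧
        μ (f' ⁻¹' {none}) + δ' ≤ μ (f ⁻¹' {none}) := by
  classical
  set A : Finset Γ := B ∪ B.biUnion fun β => (mulCayley S).neighborFinset β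
  have hA (β) (hβ : β ∈ B) (γ) (hβγ : (mulCayley S).Adj β γ) : γ ∈ A :=
    Finset.mem_union_right B (Finset.mem_biUnion.mpr ⟨β, hβ, by simpa using hβγ⟩)
  obtain ⟨δ', hδ', h⟩ :=
    exists_pairwiseDisjoint_preimage_smul_subset_fiber hfree A (A → Option κ) hδ
  refine ⟨δ', hδ', fun f hf hI => ?_⟩
  have hpattern : Measurable fun x (γ : A) => orbitLabeling f x (γ : Γ) :=
    measurable_pi_lambda _ fun γ => hf.measurable.comp (measurable_const_smul _)
  obtain ⟨x, hx, C, hCx, hC, hdisj, hδC⟩ := h _ hpattern _ hI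
  obtain ⟨f', hf', hle⟩ := hf.exists_measure_add_le (μ := μ) Finset.subset_union_left hA hC
    hdisj hx
    (fun c hc γ hγ => congrFun (hCx hc) ⟨γ, hγ⟩)
  exact ⟨f', hf', (add_le_add_right hδC _).trans hle⟩

theorem exists_isMeasurablePartialColoring_measure_none_lt [Fintype κ]
    (hfree : ∀ γ : Γ, γ ≠ 1 → ∀ᵐ x ∂μ, γ • x ≠ x) (hG : (mulCayley S).IsAcyclic)
    (hdeg : ∀ v, (mulCayley S).degree v + 2 ≤ 2 * Fintype.card κ) {η : ENNReal} (hη : η ≠ 0) :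
    ∃ f : X → Option κ, IsMeasurablePartialColoring S f ∧ μ (f ⁻¹' {none}) < η := by
  by_contra! hlarge
  obtain ⟨N, hN⟩ := ENNReal.exists_nat_mul_gt hη (b := μ Set.univ + 1) (by finiteness)
  set B : Finset Γ := (finite_ball (G := mulCayley S) 1 N).toFinset
  have himp (f : X → Option κ) (hf : IsMeasurablePartialColoring S f) :
      1 / (#B + N) ≤ μ {x | IsImprovable (mulCayley S) B (orbitLabeling f x)} := by
    refine ENNReal.div_le_of_le_mul' <| ENNReal.le_of_add_le_add_left (measure_ne_top μ Set.univ) ?_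
    calc μ Set.univ + 1 ≤ N * η := hN.le
      _ ≤ N * μ (f ⁻¹' {none}) := by gcongr; exact hlarge f hf
      _ ≤ _ := hf.mul_measure_none_le hG hdeg (finite_ball 1 N).coe_toFinset.ge
  obtain ⟨δ, hδ, hstep⟩ := exists_forall_exists_measure_none_add_le (κ := κ) (S := S) hfree B
    (ENNReal.div_pos one_ne_zero (by finiteness : (#B + N : ENNReal) ≠ ⊤)).ne'
  set m : ENNReal := ⨅ f : {f : X → Option κ // IsMeasurablePartialColoring S f},
    μ (f.1 ⁻¹' {none})
  have hm : m ≠ ⊤ := by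
    refine ne_top_of_le_ne_top (measure_ne_top μ Set.univ) ?_
    exact (iInf_le _ ⟨fun _ => none, measurable_const, fun _ _ _ _ _ => rfl⟩).trans
      (measure_mono (Set.subset_univ _))
  obtain ⟨⟨f, hf⟩, hfm⟩ := iInf_lt_iff.mp (ENNReal.lt_add_right hm hδ)
  obtain ⟨f', hf', hle⟩ := hstep f hf (himp f hf)
  exact (hfm.trans_le (add_le_add_left (iInf_le _ ⟨f', hf'⟩) δ)).not_ge hle

end Descent

section CompleteColorings

theorem exists_measurable_measure_exists_adj_smul_eq_lt [MeasurableSpace X]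
    [MeasurableSpace.CountablySeparated X] [MeasurableConstSMul Γ X] {μ : Measure X}
    [IsFiniteMeasure μ] [SMulInvariantMeasure Γ X μ] [Fintype κ] [MeasurableSpace κ]
    [(mulCayley S).LocallyFinite] (hfree : ∀ γ : Γ, γ ≠ 1 → ∀ᵐ x ∂μ, γ • x ≠ x)
    (hG : (mulCayley S).IsAcyclic) (hdeg : ∀ v, (mulCayley S).degree v + 2 ≤ 2 * Fintype.card κ)
    {ε : ENNReal} (hε : ε ≠ 0) :
    ∃ f : X → κ, Measurable f ∧ μ {x | ∃ γ, (mulCayley S).Adj 1 γ ∧ f (γ⁻¹ • x) = f x} < ε := by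
  let : MeasurableSpace (Option κ) := ⊤
  have : Nonempty κ := Fintype.card_pos_iff.mp (by have := hdeg 1; lia)
  set d := (mulCayley S).degree 1
  obtain ⟨g, hg, hlt⟩ := exists_isMeasurablePartialColoring_measure_none_lt (μ := μ) hfree hG hdeg
    (ENNReal.div_pos hε (ENNReal.natCast_ne_top (d + 1))).ne'
  refine ⟨fun x => (g x).getD (Classical.arbitrary κ),
    (measurable_from_top (f := (Option.getD · (Classical.arbitrary κ)))).comp hg.measurable, ?_⟩
  set H := g ⁻¹' {none}
  have hsubset : {x | ∃ γ, (mulCayley S).Adj 1 γ ∧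
      (g (γ⁻¹ • x)).getD (Classical.arbitrary κ) = (g x).getD (Classical.arbitrary κ)} ⊆
      H ∪ ⋃ γ ∈ (mulCayley S).neighborFinset 1, (γ⁻¹ • ·) ⁻¹' H := by
    rintro x ⟨γ, hγ, heq⟩
    by_contra hx
    simp only [Set.mem_union, Set.mem_iUnion₂, not_or, not_exists] at hx
    obtain ⟨a, ha⟩ := Option.ne_none_iff_exists'.mp hx.1
    obtain ⟨b, hb⟩ := Option.ne_none_iff_exists'.mp (hx.2 γ (by simpa using hγ))
    refine hx.1 ((orbitLabeling_one g x).symm.trans (hg.isPartialColoring x hγ ?_))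
    rw [orbitLabeling_one, orbitLabeling, ha, hb]
    rw [ha, hb] at heq
    exact congrArg some heq.symm
  calc _ ≤ μ H + ∑ γ ∈ (mulCayley S).neighborFinset 1, μ ((γ⁻¹ • ·) ⁻¹' H) :=
        (measure_mono hsubset).trans ((measure_union_le _ _).trans
          (add_le_add_right (measure_biUnion_finset_le _ _) _))
    _ = μ H * (d + 1 : ℕ) := by
        simp only [measure_preimage_smul, Finset.sum_const,
          SimpleGraph.card_neighborFinset_eq_degree]
        push_cast
        ring
    _ < ε := ENNReal.mul_lt_of_lt_div hlt

end CompleteColorings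

end EquivariantColorings

section FreeGroup

open SimpleGraph (mulCayley)

variable {α : Type*} [DecidableEq α]

theorem exists_toWord_of_mul_eq_cons_or (i : α) (x : FreeGroup α) :
    ∃ a, (FreeGroup.of i * x).toWord = a :: x.toWord ∨
      x.toWord = a :: (FreeGroup.of i * x).toWord := by
  have hreduce : (FreeGroup.of i * x).toWord = FreeGroup.reduce ((i, true) :: x.toWord) := by
    rw [FreeGroup.toWord_mul, FreeGroup.toWord_of, List.singleton_append]
  rw [hreduce, FreeGroup.reduce.cons, FreeGroup.isReduced_toWord.reduce_eq]
  rcases x.toWord with - | ⟨b, w⟩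
  · exact ⟨(i, true), .inl rfl⟩
  · dsimp only
    split_ifs
    · exact ⟨b, .inr rfl⟩
    · exact ⟨(i, true), .inl rfl⟩

theorem exists_toWord_inv_eq_cons_or_of_adj {v w : FreeGroup α}
    (hvw : (mulCayley (Set.range FreeGroup.of)).Adj v w) :
    ∃ a, v⁻¹.toWord = a :: w⁻¹.toWord ∨ w⁻¹.toWord = a :: v⁻¹.toWord := by
  obtain ⟨-, ⟨i, hi⟩ | ⟨i, hi⟩⟩ := (SimpleGraph.mulCayley_adj _ v w).mp hvw
  · obtain rfl : v = w * (FreeGroup.of i)⁻¹ := by rw [hi]; group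
    simpa only [mul_inv_rev, inv_inv] using exists_toWord_of_mul_eq_cons_or i w⁻¹
  · obtain rfl : w = v * (FreeGroup.of i)⁻¹ := by rw [hi]; group
    simpa only [mul_inv_rev, inv_inv, or_comm] using exists_toWord_of_mul_eq_cons_or i v⁻¹

theorem isAcyclic_mulCayley_range_of (α : Type*) :
    (mulCayley (Set.range (FreeGroup.of : α → FreeGroup α))).IsAcyclic := by
  classical
  have htail {v w : FreeGroup α} (hvw : (mulCayley (Set.range FreeGroup.of)).Adj v w)
      (hlt : w⁻¹.norm < v⁻¹.norm) : w⁻¹.toWord = v⁻¹.toWord.tail := by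
    obtain ⟨a, ha | ha⟩ := exists_toWord_inv_eq_cons_or_of_adj hvw
    · rw [ha, List.tail_cons]
    · simp [FreeGroup.norm, -FreeGroup.toWord_inv, ha] at hlt
  refine isAcyclic_of_depth (fun v => v⁻¹.norm) (fun v w hvw => ?_) fun v w w' hw hw' hlt hlt' => ?_
  · obtain ⟨a, ha | ha⟩ := exists_toWord_inv_eq_cons_or_of_adj hvw
    · simp [FreeGroup.norm, -FreeGroup.toWord_inv, ha]
    · simp [FreeGroup.norm, -FreeGroup.toWord_inv, ha]
  · exact inv_injective (FreeGroup.toWord_injective ((htail hw hlt).trans (htail hw' hlt').symm))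

end FreeGroup

section BernoulliShift

variable {ι Ω : Type*} [MeasurableSpace Ω] {ν : Measure Ω} [IsProbabilityMeasure ν]

theorem ae_infinitePi_apply_ne [MeasurableEq Ω] [NullSingletonClass ν] {i j : ι} (hij : i ≠ j) :
    ∀ᵐ x ∂Measure.infinitePi fun _ : ι => ν, x i ≠ x j := by
  have hdiag : ν.prod ν (Set.diagonal Ω) = 0 := by
    rw [Measure.measure_prod_null measurableSet_diagonal]
    exact .of_forall fun a => by simp [Set.preimage, Set.diagonal]
  rw [← Measure.infinitePi_map_eval_prod (P := fun _ => ν) hij,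
    Measure.map_apply (by fun_prop) measurableSet_diagonal] at hdiag
  exact measure_eq_zero_iff_ae_notMem.mp hdiag

attribute [local instance] arrowAction

variable {Γ : Type*} [Group Γ]

instance measurableConstSMul_arrowAction : MeasurableConstSMul Γ (Γ → Ω) :=
  ⟨fun _ => measurable_pi_lambda _ fun _ => measurable_pi_apply _⟩

instance smulInvariantMeasure_infinitePi :
    SMulInvariantMeasure Γ (Γ → Ω) (Measure.infinitePi fun _ => ν) :=
  ⟨fun γ s hs => by
    rw [← Measure.map_apply (measurable_const_smul γ) hs]
    exact congrArg (· s) (Measure.map_infinitePi_infinitePi_of_inj (P := fun _ : Γ => ν)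
      (mul_right_injective γ⁻¹))⟩

theorem ae_infinitePi_smul_ne [MeasurableEq Ω] [NullSingletonClass ν] {γ : Γ} (hγ : γ ≠ 1) :
    ∀ᵐ x ∂Measure.infinitePi fun _ : Γ => ν, γ • x ≠ x := by
  filter_upwards [ae_infinitePi_apply_ne (ν := ν) (inv_ne_one.mpr hγ)] with x hx heq
  exact hx ((congrArg x (mul_one _)).symm.trans (congrFun heq 1))

end BernoulliShift

attribute [local instance] arrowAction in
theorem bernoulli_shift_F2_approximate_three_coloring_general {α κ Ω : Type*} [Fintype α]
    [Fintype κ] [MeasurableSpace κ] (hcard : Fintype.card α < Fintype.card κ) [MeasurableSpace Ω]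
    [StandardBorelSpace Ω] (ν : Measure Ω) [IsProbabilityMeasure ν] [NullSingletonClass ν]
    {μ : Measure (FreeGroup α → Ω)} (hμ : IsProjectiveLimit μ fun s => Measure.pi fun _ : s => ν)
    {ε : ENNReal} (hε : ε ≠ 0) :
    ∃ f : (FreeGroup α → Ω) → κ, Measurable f ∧
      μ {x | ∃ s : FreeGroup α, (∃ i, s = FreeGroup.of i ∨ s = (FreeGroup.of i)⁻¹) ∧
        f (fun δ => x (s⁻¹ * δ)) = f x} < ε := by
  obtain rfl : μ = Measure.infinitePi fun _ => ν :=
    hμ.unique (Measure.isProjectiveLimit_infinitePi _)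
  have hdeg (v) :
      (SimpleGraph.mulCayley (Set.range (FreeGroup.of : α → _))).degree v + 2 ≤
        2 * Fintype.card κ := by
    have h := degree_mulCayley_le (Set.range (FreeGroup.of : α → _)) v
    rw [← Nat.card_coe_set_eq, Nat.card_range_of_injective FreeGroup.of_injective,
      Nat.card_eq_fintype_card] at h
    lia
  obtain ⟨f, hf, hlt⟩ := exists_measurable_measure_exists_adj_smul_eq_lt (κ := κ)
    (fun _ => ae_infinitePi_smul_ne (ν := ν)) (isAcyclic_mulCayley_range_of α) hdeg hε
  refine ⟨f, hf, (measure_mono ?_).trans_lt hlt⟩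
  rintro x ⟨s, ⟨i, hs⟩, hx⟩
  refine ⟨s⁻¹, ?_, by rwa [inv_inv]⟩
  obtain rfl | rfl := hs <;> simp [SimpleGraph.mulCayley_adj, FreeGroup.of_ne_one]

/-- Approximate coloring of the Bernoulli shift of the free group of rank 2: for every
ε > 0 there is a measurable map `f : (FreeGroup (Fin 2) → ℝ) → Fin 3` which is improper
(i.e. `f (s • x) = f x` for some generator or inverse generator `s`) only on a set of
measure less than ε. Here μ is the product over the group of Lebesgue measure on [0,1],
characterized by its finite marginals, and `(γ • x) δ = x (γ⁻¹ * δ)`. -/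
theorem bernoulli_shift_F2_approximate_three_coloring
    (μ : Measure (FreeGroup (Fin 2) → ℝ)) [IsProbabilityMeasure μ]
    (hμ : ∀ s : Finset (FreeGroup (Fin 2)),
      Measure.map (fun (x : FreeGroup (Fin 2) → ℝ) (v : s) => x v) μ
        = Measure.pi (fun _ : s => volume.restrict (Set.Icc (0:ℝ) 1)))
    (ε : ℝ) (hε : 0 < ε) :
    ∃ f : (FreeGroup (Fin 2) → ℝ) → Fin 3,
      Measurable f ∧
      μ {x | ∃ s : FreeGroup (Fin 2),
          (∃ i : Fin 2, s = FreeGroup.of i ∨ s = (FreeGroup.of i)⁻¹) ∧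
          f (fun δ => x (s⁻¹ * δ)) = f x} < ENNReal.ofReal ε := by
  have : IsProbabilityMeasure (volume.restrict (Set.Icc (0 : ℝ) 1)) := ⟨by simp⟩
  exact bernoulli_shift_F2_approximate_three_coloring_general (by simp) _ hμ
    (ENNReal.ofReal_pos.mpr hε).ne'
end

section
/- For every ε > 0 there exists an fiid labelling f : X → (V → Fin 5) of the 6-regular tree T_6 such that for μ-a.e. x ∈ X the labelling f(x) is a proper coloring of G (i.e. f(x)(u) ≠ f(x)(v) whenever u and v are adjacent), and such that for every vertex v ∈ V, μ({x : f(x)(v) = 4}) < ε. -/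
open MeasureTheory

/-! Four colours suffice. Give every vertex an independent uniform clock in `[0, 1)` and a uniform
preferred colour. A vertex is coloured when its clock rings, or earlier, as soon as its coloured
neighbours leave at most one colour free; it then takes a free colour. As at most one neighbour is
coloured at any given time, a free colour always exists, and the colouring is proper.

Whether this dynamics is well defined on the infinite tree is the question. Run it as message
passing along the edges for `n` rounds. Messages coming from different branches are independent, so
the law of their times is explicit. If the messages of a vertex after `a` and `b` rounds disagree in
a short time window, then, apart from rare coincidences and from disagreements in earlier windows,
exactly one of the five incoming messages disagrees in that window and its colour is the one that
forces the vertex. For each of the five this has conditional probability at most `4 / 25`, uniformly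
in time, so disagreements shrink by a factor close to `4 / 5` per round. By Borel-Cantelli the
messages stabilize almost surely, and the limiting colouring is proper.
-/

namespace TreeColoring

open Finset
open scoped Pointwise

section Forcing

variable {C : Type*} [Fintype C]

/-- A set of used colours is *forcing* when it leaves at most one colour free. -/
def Forcing (U : Finset C) : Prop := Fintype.card C ≤ #U + 1

instance : DecidablePred (Forcing (C := C)) := fun U =>
  inferInstanceAs (Decidable (Fintype.card C ≤ #U + 1))

lemma Forcing.mono {U U' : Finset C} (hU : Forcing U) (h : U ⊆ U') : Forcing U' :=
  le_trans hU (Nat.succ_le_succ (card_le_card h))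

lemma Forcing.nonempty [Nontrivial C] {U : Finset C} (hU : Forcing U) : U.Nonempty := by
  have hC := Fintype.one_lt_card (α := C)
  unfold Forcing at hU
  exact card_pos.1 (by lia)

end Forcing

section Pick

variable {C : Type*} [AddGroup C]

/-- A colour outside `U`, chosen relative to the preferred colour `o` so that rotating both `o` and
`U` rotates the choice. It is a junk value when `U` is everything. -/
noncomputable def pick (o : C) (U : Finset C) : C := o + Classical.epsilon fun c => o + c ∉ U

lemma pick_notMem (o : C) {U : Finset C} (h : ∃ c, c ∉ U) : pick o U ∉ U :=
  Classical.epsilon_spec (p := fun c => o + c ∉ U) (h.imp' (-o + ·) fun c hc => by simpa using hc)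

lemma pick_vadd [DecidableEq C] (a o : C) (U : Finset C) :
    pick (a + o) (a +ᵥ U) = a + pick o U := by
  have hmem : ∀ c, a + (o + c) ∈ a +ᵥ U ↔ o + c ∈ U := fun c => by
    rw [← vadd_eq_add, vadd_mem_vadd_finset_iff]
  simp only [pick, add_assoc, hmem]

end Pick

section Rule

variable {ι κ τ C : Type*} [LinearOrder τ] [DecidableEq C]

/-- The colours shown at time `T` by the neighbours in `W`, where the neighbour `w` takes the colour
`(M w).2` at time `(M w).1`. -/
def usedLE (W : Finset ι) (M : ι → τ × C) (T : τ) : Finset C :=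
  {w ∈ W | (M w).1 ≤ T}.image fun w => (M w).2

/-- The colours shown strictly before time `T`; see `usedLE`. -/
def usedLT (W : Finset ι) (M : ι → τ × C) (T : τ) : Finset C :=
  {w ∈ W | (M w).1 < T}.image fun w => (M w).2

lemma mem_usedLE {W : Finset ι} {M : ι → τ × C} {T : τ} {c : C} :
    c ∈ usedLE W M T ↔ ∃ w ∈ W, (M w).1 ≤ T ∧ (M w).2 = c := by
  simp [usedLE, and_assoc]

lemma mem_usedLT {W : Finset ι} {M : ι → τ × C} {T : τ} {c : C} :
    c ∈ usedLT W M T ↔ ∃ w ∈ W, (M w).1 < T ∧ (M w).2 = c := by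
  simp [usedLT, and_assoc]

lemma usedLE_subset_usedLT (W : Finset ι) (M : ι → τ × C) {S T : τ} (h : S < T) :
    usedLE W M S ⊆ usedLT W M T :=
  image_subset_image (monotone_filter_right W fun _ _ hw => lt_of_le_of_lt hw h)

lemma exists_usedLE_eq_usedLT {W : Finset ι} {M : ι → τ × C} {T : τ} (h : (usedLT W M T).Nonempty) :
    ∃ w ∈ W, (M w).1 < T ∧ usedLE W M (M w).1 = usedLT W M T := by
  obtain ⟨w, hw, hmax⟩ := exists_max_image _ (fun w => (M w).1) (image_nonempty.1 h)
  obtain ⟨hwW, hwT⟩ := mem_filter.1 hw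
  refine ⟨w, hwW, hwT, (usedLE_subset_usedLT W M hwT).antisymm fun c hc => ?_⟩
  obtain ⟨w', hw', hT, hc⟩ := mem_usedLT.1 hc
  exact mem_usedLE.2 ⟨w', hw', hmax w' (mem_filter.2 ⟨hw', hT⟩), hc⟩

lemma usedLT_eq_of_usedLE_eq {W : Finset ι} {W' : Finset κ} {M : ι → τ × C} {M' : κ → τ × C} {T : τ}
    (h : ∀ s < T, usedLE W M s = usedLE W' M' s) : usedLT W M T = usedLT W' M' T := by
  ext c
  constructor <;> intro hc
  · obtain ⟨w, hw, hT, hc⟩ := mem_usedLT.1 hc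
    exact usedLE_subset_usedLT W' M' hT (h _ hT ▸ mem_usedLE.2 ⟨w, hw, le_rfl, hc⟩)
  · obtain ⟨w, hw, hT, hc⟩ := mem_usedLT.1 hc
    exact usedLE_subset_usedLT W M hT (h _ hT ▸ mem_usedLE.2 ⟨w, hw, le_rfl, hc⟩)

lemma usedLE_erase [DecidableEq ι] {W : Finset ι} {M : ι → τ × C} {u : ι} {T : τ}
    (hT : T < (M u).1) : usedLE (W.erase u) M T = usedLE W M T := by
  rw [usedLE, usedLE, filter_erase, erase_eq_of_notMem (by simp [hT])]

lemma card_usedLE_le {W : Finset ι} {M : ι → τ × C} (hinj : Set.InjOn (fun w => (M w).1) W)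
    (T : τ) : #(usedLE W M T) ≤ #(usedLT W M T) + 1 := by
  classical
  have hsplit : {w ∈ W | (M w).1 ≤ T} = {w ∈ W | (M w).1 < T} ∪ {w ∈ W | (M w).1 = T} := by
    simp only [← filter_or, le_iff_lt_or_eq]
  have hone : #{w ∈ W | (M w).1 = T} ≤ 1 := card_le_one.2 fun a ha b hb => by
    simp only [mem_filter] at ha hb
    exact hinj ha.1 hb.1 (ha.2.trans hb.2.symm)
  rw [usedLE, hsplit, image_union]
  exact (card_union_le _ _).trans (Nat.add_le_add_left (card_image_le.trans hone) _)

lemma usedLE_add_left [AddGroup C] (a : C) (W : Finset ι) (M : ι → τ × C) (T : τ) :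
    usedLE W (fun w => ((M w).1, a + (M w).2)) T = a +ᵥ usedLE W M T := by
  rw [usedLE, usedLE, ← image_vadd, image_image]; rfl

lemma usedLT_add_left [AddGroup C] (a : C) (W : Finset ι) (M : ι → τ × C) (T : τ) :
    usedLT W (fun w => ((M w).1, a + (M w).2)) T = a +ᵥ usedLT W M T := by
  rw [usedLT, usedLT, ← image_vadd, image_image]; rfl

variable [Fintype C]

/-- The time at which a vertex with clock `t` is coloured: when its clock rings, or earlier, as soon
as the colours of its neighbours are forcing. -/
def colorTime (t : τ) (W : Finset ι) (M : ι → τ × C) : τ :=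
  (insert t ({w ∈ W | Forcing (usedLE W M (M w).1)}.image fun w => (M w).1)).min'
    (insert_nonempty _ _)

lemma colorTime_le (t : τ) (W : Finset ι) (M : ι → τ × C) : colorTime t W M ≤ t :=
  min'_le _ _ (mem_insert_self _ _)

lemma colorTime_eq_or (t : τ) (W : Finset ι) (M : ι → τ × C) :
    colorTime t W M = t ∨
      ∃ w ∈ W, colorTime t W M = (M w).1 ∧ Forcing (usedLE W M (colorTime t W M)) := by
  rcases mem_insert.1 (min'_mem (insert t ({w ∈ W | Forcing (usedLE W M (M w).1)}.image
    fun w => (M w).1)) (insert_nonempty _ _)) with h | h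
  · exact Or.inl h
  · obtain ⟨w, hw, hwt⟩ := mem_image.1 h
    obtain ⟨hwW, hwF⟩ := mem_filter.1 hw
    have hw' : colorTime t W M = (M w).1 := hwt.symm
    exact Or.inr ⟨w, hwW, hw', hw' ▸ hwF⟩

lemma forcing_of_colorTime_lt {t : τ} {W : Finset ι} {M : ι → τ × C} (h : colorTime t W M < t) :
    Forcing (usedLE W M (colorTime t W M)) := by
  rcases colorTime_eq_or t W M with ht | ⟨w, -, -, hF⟩
  · exact absurd ht h.ne
  · exact hF

variable [Nontrivial C]

lemma le_colorTime {t T : τ} {W : Finset ι} {M : ι → τ × C} :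
    T ≤ colorTime t W M ↔ T ≤ t ∧ ¬ Forcing (usedLT W M T) := by
  constructor
  · refine fun h => ⟨h.trans (colorTime_le t W M), fun hF => ?_⟩
    obtain ⟨w, hw, hT, hU⟩ := exists_usedLE_eq_usedLT hF.nonempty
    have : colorTime t W M ≤ (M w).1 := min'_le _ _ <| mem_insert_of_mem <| mem_image_of_mem _ <|
      mem_filter.2 ⟨hw, hU ▸ hF⟩
    exact (this.trans_lt hT).not_ge h
  · rintro ⟨hT, hF⟩
    rcases colorTime_eq_or t W M with ht | ⟨w, -, -, hF'⟩
    · exact hT.trans ht.ge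
    · by_contra! hlt
      exact hF (hF'.mono (usedLE_subset_usedLT W M hlt))

lemma not_forcing_usedLT_colorTime (t : τ) (W : Finset ι) (M : ι → τ × C) :
    ¬ Forcing (usedLT W M (colorTime t W M)) :=
  (le_colorTime.1 (le_refl (colorTime t W M))).2

lemma colorTime_eq_of_usedLE_eq {t T : τ} {W : Finset ι} {W' : Finset κ} {M : ι → τ × C}
    {M' : κ → τ × C} (h : ∀ s < T, usedLE W M s = usedLE W' M' s) (hT : colorTime t W M < T) :
    colorTime t W M = colorTime t W' M' := by
  apply le_antisymm
  · rw [le_colorTime, ← usedLT_eq_of_usedLE_eq fun s hs => h s (hs.trans hT)]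
    exact le_colorTime.1 le_rfl
  · by_contra! hlt
    have hF := forcing_of_colorTime_lt (hlt.trans_le (colorTime_le t W' M'))
    rw [h _ hT] at hF
    exact not_forcing_usedLT_colorTime t W' M' (hF.mono (usedLE_subset_usedLT W' M' hlt))

lemma colorTime_congr {W : Finset ι} {W' : Finset κ} {M : ι → τ × C} {M' : κ → τ × C}
    (t : τ) (h : ∀ T, usedLT W M T = usedLT W' M' T) :
    colorTime t W M = colorTime t W' M' :=
  eq_of_forall_le_iff fun T => by rw [le_colorTime, le_colorTime, h T]

lemma le_colorTime_of_le_colorTime_erase [DecidableEq ι] {t : τ} {W : Finset ι} {M : ι → τ × C}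
    {u : ι} (h : (M u).1 ≤ colorTime t (W.erase u) M) : (M u).1 ≤ colorTime t W M := by
  rw [le_colorTime] at h ⊢
  rwa [← usedLT_eq_of_usedLE_eq fun r hr => usedLE_erase hr]

/-- If a clock avoids the window `[T₀, T₁)` and among the neighbours only `w` may be coloured during
it, then a vertex coloured during the window is coloured because of the colour of `w`. -/
lemma card_usedLT_erase_of_colorTime_mem [DecidableEq ι] {t T₀ T₁ : τ} {W : Finset ι}
    {M : ι → τ × C} {w : ι} (hw : w ∈ W) (hmem : colorTime t W M ∈ Set.Ico T₀ T₁)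
    (ht : t ∉ Set.Ico T₀ T₁) (hM : ∀ w' ∈ W.erase w, (M w').1 ∉ Set.Ico T₀ T₁) :
    T₁ ≤ t ∧ (M w).1 < T₁ ∧ (M w).2 ∉ usedLT (W.erase w) M T₀ ∧
      #(usedLT (W.erase w) M T₀) + 2 = Fintype.card C := by
  obtain ⟨hT₀, hT₁⟩ := hmem
  have hT₁t : T₁ ≤ t := by
    by_contra! h
    exact ht ⟨hT₀.trans (colorTime_le t W M), h⟩
  have hforced := forcing_of_colorTime_lt (hT₁.trans_le hT₁t)
  have hfree : ¬ Forcing (usedLT (W.erase w) M T₀) := fun h =>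
    (le_colorTime.1 hT₀).2 (h.mono (image_subset_image (filter_subset_filter _ (erase_subset w W))))
  have hinsert : usedLE W M (colorTime t W M) ⊆ insert (M w).2 (usedLT (W.erase w) M T₀) := by
    intro c hc
    obtain ⟨w', hw', hle, rfl⟩ := mem_usedLE.1 hc
    rcases eq_or_ne w' w with rfl | hne
    · exact mem_insert_self _ _
    · have hw'' := mem_erase.2 ⟨hne, hw'⟩
      refine mem_insert_of_mem (mem_usedLT.2 ⟨w', hw'', ?_, rfl⟩)
      by_contra! h
      exact hM w' hw'' ⟨h, hle.trans_lt hT₁⟩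
  have hnotMem : (M w).2 ∉ usedLT (W.erase w) M T₀ := fun h =>
    hfree (hforced.mono (hinsert.trans (insert_subset h subset_rfl)))
  refine ⟨hT₁t, ?_, hnotMem, ?_⟩
  · by_contra! hT
    refine hfree (hforced.mono fun c hc => (mem_insert.1 (hinsert hc)).resolve_left ?_)
    rintro rfl
    rw [← usedLE_erase (hT₁.trans_le hT)] at hc
    obtain ⟨w', hw', hle, hc⟩ := mem_usedLE.1 hc
    refine hnotMem (mem_usedLT.2 ⟨w', hw', ?_, hc⟩)
    by_contra! h
    exact hM w' hw' ⟨h, hle.trans_lt hT₁⟩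
  · have hle := card_le_card hinsert
    rw [card_insert_of_notMem hnotMem] at hle
    unfold Forcing at hforced hfree
    lia

variable [AddGroup C]

/-- The update rule: from its own clock and preferred colour `s`, and the times and colours `M` of
the neighbours in `W`, a vertex computes its own time and colour. -/
noncomputable def recolor (s : τ × C) (W : Finset ι) (M : ι → τ × C) : τ × C :=
  (colorTime s.1 W M, pick s.2 (usedLE W M (colorTime s.1 W M)))

lemma recolor_eq_of_usedLE_eq {s : τ × C} {T : τ} {W : Finset ι} {W' : Finset κ} {M : ι → τ × C}
    {M' : κ → τ × C} (h : ∀ r < T, usedLE W M r = usedLE W' M' r) (hT : colorTime s.1 W M < T) :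
    recolor s W M = recolor s W' M' := by
  rw [recolor, recolor, ← colorTime_eq_of_usedLE_eq h hT, h _ hT]

lemma recolor_congr (s : τ × C) {W : Finset ι} {W' : Finset κ} {M : ι → τ × C} {M' : κ → τ × C}
    (h : ∀ r, usedLE W M r = usedLE W' M' r) : recolor s W M = recolor s W' M' := by
  rw [recolor, recolor, h, colorTime_congr s.1 fun T => usedLT_eq_of_usedLE_eq fun r _ => h r]

lemma recolor_map (s : τ × C) (e : ι ↪ κ) (W : Finset ι) (M : κ → τ × C) :
    recolor s (W.map e) M = recolor s W (M ∘ e) :=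
  recolor_congr s fun r => by ext; simp [mem_usedLE]

lemma recolor_add_left (a : C) (s : τ × C) (W : Finset ι) (M : ι → τ × C) :
    recolor (s.1, a + s.2) W (fun w => ((M w).1, a + (M w).2))
      = ((recolor s W M).1, a + (recolor s W M).2) := by
  have htime : colorTime s.1 W (fun w => ((M w).1, a + (M w).2)) = colorTime s.1 W M :=
    eq_of_forall_le_iff fun T => by simp [le_colorTime, usedLT_add_left, Forcing]
  simp only [recolor, htime, usedLE_add_left, pick_vadd]

lemma recolor_erase [DecidableEq ι] {s : τ × C} {W : Finset ι} {M : ι → τ × C} {u : ι}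
    (h : colorTime s.1 (W.erase u) M < (M u).1) : recolor s (W.erase u) M = recolor s W M :=
  recolor_eq_of_usedLE_eq (fun _ hr => usedLE_erase hr) h

/-- The colours used strictly before the colouring time are not forcing, so at least two are free;
at the colouring time itself at most one more colour is used. -/
lemma recolor_notMem_usedLE (s : τ × C) {W : Finset ι} {M : ι → τ × C}
    (hinj : Set.InjOn (fun w => (M w).1) W) :
    (recolor s W M).2 ∉ usedLE W M (recolor s W M).1 := by
  refine pick_notMem _ ?_
  by_contra! hall
  have hcard := card_usedLE_le hinj (recolor s W M).1
  rw [eq_univ_of_forall hall, card_univ] at hcard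
  exact not_forcing_usedLT_colorTime s.1 W M hcard

end Rule

section Discrepancy

variable {ι τ C : Type*} [LinearOrder τ]

/-- The messages `m` and `m'` differ, and the earlier of their two times lies in `I`. -/
def DiscrepancyIn (I : Set τ) (m m' : τ × C) : Prop := m ≠ m' ∧ min m.1 m'.1 ∈ I

lemma DiscrepancyIn.symm {I : Set τ} {m m' : τ × C} (h : DiscrepancyIn I m m') :
    DiscrepancyIn I m' m :=
  ⟨h.1.symm, min_comm m.1 m'.1 ▸ h.2⟩

lemma DiscrepancyIn.mono {I J : Set τ} {m m' : τ × C} (h : DiscrepancyIn I m m') (hIJ : I ⊆ J) :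
    DiscrepancyIn J m m' :=
  ⟨h.1, hIJ h.2⟩

lemma usedLE_subset_of_not_discrepancyIn [DecidableEq C] {W : Finset ι} {M M' : ι → τ × C}
    {T r : τ} (hr : r < T) (h : ∀ w ∈ W, ¬ DiscrepancyIn (Set.Iio T) (M w) (M' w)) :
    usedLE W M r ⊆ usedLE W M' r := by
  intro c hc
  obtain ⟨w, hw, hle, hc⟩ := mem_usedLE.1 hc
  have heq : M w = M' w := by
    by_contra hne
    exact h w hw ⟨hne, (min_le_left _ _).trans_lt (hle.trans_lt hr)⟩
  exact mem_usedLE.2 ⟨w, hw, heq ▸ hle, heq ▸ hc⟩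

lemma DiscrepancyIn.exists_of_recolor [DecidableEq C] [Fintype C] [Nontrivial C] [AddGroup C]
    {s : τ × C} {W : Finset ι} {M M' : ι → τ × C} {T : τ}
    (h : DiscrepancyIn (Set.Iio T) (recolor s W M) (recolor s W M')) :
    ∃ w ∈ W, DiscrepancyIn (Set.Iio T) (M w) (M' w) := by
  by_contra! hno
  have hused : ∀ r < T, usedLE W M r = usedLE W M' r := fun r hr =>
    (usedLE_subset_of_not_discrepancyIn hr hno).antisymm
      (usedLE_subset_of_not_discrepancyIn hr fun w hw hd => hno w hw hd.symm)
  rcases min_lt_iff.1 h.2 with hT | hT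
  · exact h.1 (recolor_eq_of_usedLE_eq hused hT)
  · exact h.1 (recolor_eq_of_usedLE_eq (fun r hr => (hused r hr).symm) hT).symm

/-- A discrepancy in `I` in the sense of `DiscrepancyIn` for which even the time of the first
message lies in `I`. -/
def DiscrepancyFrom (I : Set τ) (m m' : τ × C) : Prop := DiscrepancyIn I m m' ∧ m.1 ∈ I

lemma DiscrepancyIn.from_or_from {I : Set τ} {m m' : τ × C} (h : DiscrepancyIn I m m') :
    DiscrepancyFrom I m m' ∨ DiscrepancyFrom I m' m := by
  rcases min_choice m.1 m'.1 with hmin | hmin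
  · exact Or.inl ⟨h, hmin ▸ h.2⟩
  · exact Or.inr ⟨h.symm, hmin ▸ h.2⟩

/-- The clock of the seed `s` or the time of some message `M w` with `w ∈ W` lies in `I`. -/
def Busy (I : Set τ) (s : τ × C) (W : Finset ι) (M : ι → τ × C) : Prop :=
  s.1 ∈ I ∨ ∃ w ∈ W, (M w).1 ∈ I

/-- From time `T` on, one more neighbour of colour `c` would force a vertex with seed `s` and
neighbours `W`, and the clock of that vertex has not yet rung. -/
def Pivotal [DecidableEq C] [Fintype C] (T : τ) (s : τ × C) (W : Finset ι) (M : ι → τ × C) (c : C) :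
    Prop :=
  T ≤ s.1 ∧ c ∉ usedLT W M T ∧ #(usedLT W M T) + 2 = Fintype.card C

lemma DiscrepancyFrom.exists_of_recolor [DecidableEq ι] [DecidableEq C] [Fintype C] [Nontrivial C]
    [AddGroup C] {s : τ × C} {W : Finset ι} {M M' : ι → τ × C} {T₀ T₁ : τ}
    (h : DiscrepancyFrom (Set.Ico T₀ T₁) (recolor s W M) (recolor s W M')) :
    ∃ w ∈ W, DiscrepancyIn (Set.Iio T₀) (M w) (M' w) ∨
      DiscrepancyIn (Set.Ico T₀ T₁) (M w) (M' w) ∧ Busy (Set.Ico T₀ T₁) s (W.erase w) M ∨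
      DiscrepancyFrom (Set.Ico T₀ T₁) (M w) (M' w) ∧ Pivotal T₀ s (W.erase w) M (M w).2 := by
  obtain ⟨w, hw, hd⟩ := DiscrepancyIn.exists_of_recolor (h.1.mono fun _ hr => hr.2)
  refine ⟨w, hw, ?_⟩
  by_cases hT₀ : min (M w).1 (M' w).1 < T₀
  · exact Or.inl ⟨hd.1, hT₀⟩
  have hI : DiscrepancyIn (Set.Ico T₀ T₁) (M w) (M' w) := ⟨hd.1, not_lt.1 hT₀, hd.2⟩
  by_cases hbusy : Busy (Set.Ico T₀ T₁) s (W.erase w) M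
  · exact Or.inr (Or.inl ⟨hI, hbusy⟩)
  unfold Busy at hbusy
  push Not at hbusy
  obtain ⟨hclock, hlt, hnotMem, hcard⟩ :=
    card_usedLT_erase_of_colorTime_mem hw h.2 hbusy.1 hbusy.2
  exact Or.inr (Or.inr ⟨⟨hI, hI.2.1.trans (min_le_left _ _), hlt⟩,
    (h.2.1.trans_lt h.2.2).le.trans hclock, hnotMem, hcard⟩)

end Discrepancy

section MessageTime

/-- The probability that five neighbours show at most two of the four colours, when each of them
independently shows a uniform colour with probability `p` and no colour otherwise. -/
noncomputable def fewProb (p : ℝ) : ℝ :=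
  6 * (1 - p / 2) ^ 5 - 8 * (1 - 3 * p / 4) ^ 5 + 3 * (1 - p) ^ 5

/-- The probability that four neighbours show exactly two of the four colours, none of them a given
colour, in the setting of `fewProb`. -/
noncomputable def twoProb (p : ℝ) : ℝ :=
  3 * ((1 - p / 2) ^ 4 - 2 * (1 - 3 * p / 4) ^ 4 + (1 - p) ^ 4)

/-- The distribution function of the time carried by a message that has propagated over `n` edges.
A message is later than `T` when the clock of its sender is, and when the sender sees at most two
colours by time `T`. -/
noncomputable def messageCDF : ℕ → ℝ → ℝ
  | 0, T => T
  | n + 1, T => 1 - (1 - T) * fewProb (messageCDF n T)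

lemma twoProb_nonneg (p : ℝ) : 0 ≤ twoProb p := by
  have h : twoProb p = 36 * ((1 - 3 * p / 4) * (p / 4)) ^ 2 + 6 * ((p / 4) ^ 2) ^ 2 := by
    unfold twoProb; ring
  rw [h]
  positivity

lemma hasDerivAt_fewProb (p : ℝ) : HasDerivAt fewProb (-(5 * twoProb p)) p := by
  have hpow (a : ℝ) : HasDerivAt (fun p : ℝ => (1 - a * p) ^ 5) (-(5 * a * (1 - a * p) ^ 4)) p := by
    refine ((((hasDerivAt_id p).const_mul a).const_sub 1).pow 5).congr_deriv ?_
    simp only [id_eq]; push_cast; ring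
  have hsum := (((hpow (1 / 2)).const_mul 6).sub ((hpow (3 / 4)).const_mul 8)).add
    ((hpow 1).const_mul 3)
  refine (hsum.congr_deriv ?_).congr_of_eventuallyEq (.of_forall fun q => ?_)
  · unfold twoProb; ring
  · simp only [fewProb, Pi.add_apply, Pi.sub_apply]; ring

lemma fewProb_antitone : Antitone fewProb :=
  antitone_of_hasDerivAt_nonpos hasDerivAt_fewProb fun p => by
    have := twoProb_nonneg p
    simp only [Pi.zero_apply]
    linarith

lemma fewProb_pos {p : ℝ} (h : p ≤ 1) : 0 < fewProb p :=
  lt_of_lt_of_le (by norm_num [fewProb]) (fewProb_antitone h)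

lemma fewProb_le_one {p : ℝ} (h : 0 ≤ p) : fewProb p ≤ 1 :=
  (fewProb_antitone h).trans (by norm_num [fewProb])

/-- The inequality that makes the messages contract. It is nearly tight at `p = 0.62`. -/
lemma twoProb_le_fewProb {p : ℝ} (h0 : 0 ≤ p) (h1 : p ≤ 1) :
    5 * ((1 - p) * twoProb p) ≤ 4 / 5 * fewProb p := by
  have h1' : 0 ≤ 1 - p := sub_nonneg.2 h1
  have hs : 0 ≤ (p - 31 / 50) ^ 2 := sq_nonneg _
  unfold fewProb twoProb
  linarith [mul_nonneg hs (pow_nonneg h1' 3), mul_nonneg hs (mul_nonneg h0 (pow_nonneg h1' 2)),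
    mul_nonneg hs (mul_nonneg (pow_nonneg h0 2) h1'), mul_nonneg hs (pow_nonneg h0 3)]

lemma messageCDF_mem_Icc (n : ℕ) {T : ℝ} (hT : T ∈ Set.Icc 0 1) : messageCDF n T ∈ Set.Icc 0 1 := by
  induction n with
  | zero => exact hT
  | succ n ih =>
    have hpos := (fewProb_pos ih.2).le
    have hle := fewProb_le_one ih.1
    have h1 : 0 ≤ 1 - T := sub_nonneg.2 hT.2
    exact ⟨sub_nonneg.2 (mul_le_one₀ (sub_le_self 1 hT.1) hpos hle),
      sub_le_self 1 (mul_nonneg h1 hpos)⟩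

lemma messageCDF_le_succ (n : ℕ) {T : ℝ} (hT : T ∈ Set.Icc 0 1) :
    messageCDF n T ≤ messageCDF (n + 1) T := by
  have h1 : 0 ≤ 1 - T := sub_nonneg.2 hT.2
  induction n with
  | zero =>
    have := mul_le_mul_of_nonneg_left (fewProb_le_one hT.1) h1
    simp only [messageCDF]
    linarith
  | succ n ih =>
    have := mul_le_mul_of_nonneg_left (fewProb_antitone ih) h1
    rw [messageCDF, messageCDF]
    linarith

/-- As `1 - messageCDF n T ≥ (1 - T) * fewProb (messageCDF n T)` by monotonicity in `n`, the factor
`1 - T` may be traded for `(1 - messageCDF n T) / fewProb (messageCDF n T)`. -/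
lemma twoProb_messageCDF_le (n : ℕ) {T : ℝ} (hT : T ∈ Set.Icc 0 1) :
    5 * ((1 - T) * twoProb (messageCDF n T)) ≤ 4 / 5 := by
  have hmem := messageCDF_mem_Icc n hT
  set p := messageCDF n T with hp
  have hpos := fewProb_pos hmem.2
  have hmono : (1 - T) * fewProb p ≤ 1 - p := by
    have := messageCDF_le_succ n hT
    rw [messageCDF, ← hp] at this
    linarith
  refine le_of_mul_le_mul_right ?_ hpos
  calc 5 * ((1 - T) * twoProb p) * fewProb p
      = 5 * ((1 - T) * fewProb p * twoProb p) := by ring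
    _ ≤ 5 * ((1 - p) * twoProb p) := by gcongr; exact twoProb_nonneg p
    _ ≤ 4 / 5 * fewProb p := twoProb_le_fewProb hmem.1 hmem.2

lemma exists_hasDerivAt_messageCDF (n : ℕ) {T : ℝ} (hT : T ∈ Set.Icc 0 1) :
    ∃ d ∈ Set.Icc (0 : ℝ) 5, HasDerivAt (messageCDF n) d T := by
  induction n with
  | zero => exact ⟨1, by norm_num, hasDerivAt_id T⟩
  | succ n ih =>
    obtain ⟨d, ⟨hd0, hd5⟩, hd⟩ := ih
    have hmem := messageCDF_mem_Icc n hT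
    have htwo := twoProb_nonneg (messageCDF n T)
    have h1 : 0 ≤ 1 - T := sub_nonneg.2 hT.2
    have hderiv := (((hasDerivAt_id T).const_sub 1).mul
      ((hasDerivAt_fewProb (messageCDF n T)).comp T hd)).const_sub 1
    refine ⟨fewProb (messageCDF n T) + 5 * ((1 - T) * twoProb (messageCDF n T)) * d, ⟨?_, ?_⟩,
      hderiv.congr_deriv (by simp only [id_eq, Function.comp_apply]; ring)⟩
    · have := (fewProb_pos hmem.2).le
      positivity
    · calc _ ≤ 1 + 4 / 5 * 5 := add_le_add (fewProb_le_one hmem.1)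
            (mul_le_mul (twoProb_messageCDF_le n hT) hd5 hd0 (by norm_num))
        _ = 5 := by norm_num

lemma messageCDF_sub_le (n : ℕ) {a b : ℝ} (ha : 0 ≤ a) (hab : a ≤ b) (hb : b ≤ 1) :
    messageCDF n b - messageCDF n a ≤ 5 * (b - a) := by
  have hderiv : ∀ T ∈ Set.Icc a b, ∃ d ∈ Set.Icc (0 : ℝ) 5, HasDerivAt (messageCDF n) d T :=
    fun T hT => exists_hasDerivAt_messageCDF n ⟨ha.trans hT.1, hT.2.trans hb⟩
  have hdiff : ∀ T ∈ Set.Icc a b, DifferentiableAt ℝ (messageCDF n) T := fun T hT =>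
    let ⟨_, _, hd⟩ := hderiv T hT
    hd.differentiableAt
  refine (convex_Icc a b).image_sub_le_mul_sub_of_deriv_le
    (fun T hT => (hdiff T hT).continuousAt.continuousWithinAt)
    (fun T hT => (hdiff T (interior_subset hT)).differentiableWithinAt) (fun T hT => ?_)
    a (Set.left_mem_Icc.2 hab) b (Set.right_mem_Icc.2 hab) hab
  obtain ⟨d, hd5, hd⟩ := hderiv T (interior_subset hT)
  exact hd.deriv.trans_le hd5.2

end MessageTime

section Independence

open ProbabilityTheory

variable {ι : Type*} {X : ι → Type*} [∀ i, MeasurableSpace (X i)]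

lemma indep_cylinderEvents (ρ : ∀ i, Measure (X i)) [∀ i, IsProbabilityMeasure (ρ i)] {A B : Set ι}
    (hAB : Disjoint A B) : Indep (cylinderEvents A) (cylinderEvents B) (Measure.infinitePi ρ) :=
  indep_iSup_of_disjoint (fun i => (measurable_pi_apply i).comap_le)
    (iIndepFun_infinitePi (P := ρ) (X := fun _ x => x) fun _ => measurable_id).iIndep hAB

lemma measureReal_inter_of_cylinderEvents (ρ : ∀ i, Measure (X i))
    [∀ i, IsProbabilityMeasure (ρ i)] {A B : Set ι} (hAB : Disjoint A B)
    {E F : Set (∀ i, X i)} (hE : MeasurableSet[cylinderEvents A] E)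
    (hF : MeasurableSet[cylinderEvents B] F) :
    (Measure.infinitePi ρ).real (E ∩ F)
      = (Measure.infinitePi ρ).real E * (Measure.infinitePi ρ).real F := by
  simp only [Measure.real, (Indep_iff _ _ _).1 (indep_cylinderEvents ρ hAB) E F hE hF,
    ENNReal.toReal_mul]

lemma measureReal_biInter_of_cylinderEvents (ρ : ∀ i, Measure (X i))
    [∀ i, IsProbabilityMeasure (ρ i)] {κ : Type*} (s : Finset κ) {A : κ → Set ι}
    (hA : (s : Set κ).PairwiseDisjoint A) {E : κ → Set (∀ i, X i)}
    (hE : ∀ k ∈ s, MeasurableSet[cylinderEvents (A k)] (E k)) :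
    (Measure.infinitePi ρ).real (⋂ k ∈ s, E k) = ∏ k ∈ s, (Measure.infinitePi ρ).real (E k) := by
  classical
  induction s using Finset.induction with
  | empty => simp
  | insert k s hk ih =>
    rw [coe_insert, Set.pairwiseDisjoint_insert_of_notMem (by simpa using hk)] at hA
    have hdisj : Disjoint (A k) (⋃ j ∈ s, A j) := Set.disjoint_iUnion₂_right.2 hA.2
    have hmeas : MeasurableSet[cylinderEvents (⋃ j ∈ s, A j)] (⋂ j ∈ s, E j) :=
      .biInter s.countable_toSet fun j hj =>
        cylinderEvents_mono (Set.subset_biUnion_of_mem hj) _ (hE j (mem_insert_of_mem hj))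
    rw [set_biInter_insert, prod_insert hk, measureReal_inter_of_cylinderEvents ρ hdisj
      (hE k (mem_insert_self _ _)) hmeas, ih hA.1 fun j hj => hE j (mem_insert_of_mem hj)]

lemma measureReal_inter_fiber_le {Ω C : Type*} {m₁ m₂ mΩ : MeasurableSpace Ω} {P : Measure Ω}
    [IsFiniteMeasure P] (hm₁ : m₁ ≤ mΩ) (h : Indep m₁ m₂ P) [Finite C]
    [MeasurableSpace C] [MeasurableSingletonClass C] {E : Set Ω} (hE : MeasurableSet[m₁] E)
    {c : Ω → C} (hc : Measurable[m₁] c) {A : C → Set Ω} (hA : ∀ b, MeasurableSet[m₂] (A b)) {r : ℝ}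
    (hr : ∀ b, P.real (A b) ≤ r) : P.real (E ∩ {ω | ω ∈ A (c ω)}) ≤ P.real E * r := by
  cases nonempty_fintype C
  have hcm : ∀ b, MeasurableSet[m₁] (c ⁻¹' {b}) := fun b => hc (measurableSet_singleton b)
  have hsub : E ∩ {ω | ω ∈ A (c ω)} ⊆ ⋃ b ∈ (univ : Finset C), (c ⁻¹' {b} ∩ E) ∩ A b := fun ω hω =>
    Set.mem_biUnion (mem_univ (c ω)) ⟨⟨rfl, hω.1⟩, hω.2⟩
  calc P.real (E ∩ {ω | ω ∈ A (c ω)})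
      ≤ ∑ b, P.real ((c ⁻¹' {b} ∩ E) ∩ A b) :=
        (measureReal_mono hsub (measure_ne_top P _)).trans (measureReal_biUnion_finset_le _ _)
    _ = ∑ b, P.real (c ⁻¹' {b} ∩ E) * P.real (A b) := sum_congr rfl fun b _ => by
        simp only [Measure.real, (Indep_iff _ _ _).1 h _ _ ((hcm b).inter hE) (hA b),
          ENNReal.toReal_mul]
    _ ≤ ∑ b, P.real (c ⁻¹' {b} ∩ E) * r := by gcongr with b; exact hr b
    _ = P.real E * r := by
        have hsum := sum_measureReal_preimage_singleton (μ := P.restrict E) (univ : Finset C)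
          (f := c) fun b _ => hm₁ _ (hcm b)
        simp only [measureReal_restrict_apply (hm₁ _ (hcm _)), coe_univ, Set.preimage_univ,
          measureReal_restrict_apply_univ] at hsum
        rw [← sum_mul, hsum]

end Independence

section Sampling

open unitInterval in
lemma exists_measurable_map_uniform_eq {S : Type*} [MeasurableSpace S] [StandardBorelSpace S]
    [Nonempty S] (ρ : Measure S) [IsProbabilityMeasure ρ] :
    ∃ g : ℝ → S, Measurable g ∧ (volume.restrict (Set.Icc 0 1)).map g = ρ := by
  obtain ⟨f, hf, hmap⟩ := Measure.exists_measurable_map_eq ρ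
  refine ⟨fun t => f (Set.projIcc 0 1 zero_le_one t),
    hf.comp continuous_projIcc.measurable, ?_⟩
  have hproj : (volume.restrict (Set.Icc (0 : ℝ) 1)).map (Set.projIcc 0 1 zero_le_one)
      = (volume : Measure I) := by
    rw [← map_comap_subtype_coe measurableSet_Icc, Measure.map_map
      continuous_projIcc.measurable measurable_subtype_coe]
    simp [Function.comp_def]
    rfl
  rw [← hmap, ← hproj, Measure.map_map hf continuous_projIcc.measurable]
  rfl

end Sampling

section Inclusion

variable {Ω C : Type*} [MeasurableSpace Ω] {P : Measure Ω} [IsFiniteMeasure P] [Fintype C]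
  [DecidableEq C] {U : Ω → Finset C}

lemma measureReal_eq_sum_subset (hU : ∀ S, MeasurableSet {ω | U ω = S})
    {Q : Finset C → Prop} [DecidablePred Q] {a : Finset C → ℤ}
    (ha : ∀ A, (if Q A then 1 else 0) = ∑ S with A ⊆ S, a S) :
    P.real {ω | Q (U ω)} = ∑ S, a S * P.real {ω | U ω ⊆ S} := by
  have hfiber (R : Finset C → Prop) [DecidablePred R] :
      P.real {ω | R (U ω)} = ∑ A with R A, P.real {ω | U ω = A} := by
    calc P.real {ω | R (U ω)} = P.real (U ⁻¹' ({A | R A} : Finset (Finset C))) := by simp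
      _ = ∑ A with R A, P.real {ω | U ω = A} :=
        (sum_measureReal_preimage_singleton _ fun A _ => hU A).symm
  calc P.real {ω | Q (U ω)}
      = ∑ A, (∑ S with A ⊆ S, (a S : ℝ)) * P.real {ω | U ω = A} := by
        rw [hfiber, sum_filter]
        refine sum_congr rfl fun A _ => ?_
        rw [← Int.cast_sum, ← ha A]
        split_ifs <;> simp
    _ = ∑ S, a S * ∑ A with A ⊆ S, P.real {ω | U ω = A} := by
        simp only [sum_mul, mul_sum]
        exact sum_comm' (by simp)
    _ = ∑ S, a S * P.real {ω | U ω ⊆ S} := by exact sum_congr rfl fun S _ => by rw [hfiber (· ⊆ S)]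

/-- The inclusion-exclusion weights that express the event of using at most two colours through the
events of using only colours in `S`, as a function of `#S`. -/
def fewWeight : ℕ → ℤ
  | 0 => 3
  | 1 => -2
  | 2 => 1
  | _ => 0

lemma ite_not_forcing_eq_sum : ∀ A : Finset (Fin 4),
    (if ¬ Forcing A then 1 else 0) = ∑ S with A ⊆ S, fewWeight #S := by
  decide

lemma ite_card_eq_two_eq_sum : ∀ (c : Fin 4) (A : Finset (Fin 4)),
    (if c ∉ A ∧ #A = 2 then 1 else 0) = ∑ S with A ⊆ S, if c ∉ S then fewWeight #S else 0 := by
  decide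

end Inclusion

section Measurability

variable {Ω ι C : Type*} {mΩ : MeasurableSpace Ω} [DecidableEq C] [MeasurableSpace C]
  [DiscreteMeasurableSpace C] {W : Finset ι} {M : ι → Ω → ℝ × C}

lemma measurable_usedLE (hM : ∀ w ∈ W, Measurable (M w)) {T : Ω → ℝ} (hT : Measurable T) :
    Measurable fun ω => usedLE W (fun w => M w ω) (T ω) := by
  refine measurable_finset_iff.2 fun c => measurableSet_setOfPred.1 ?_
  have heq : {ω | c ∈ usedLE W (fun w => M w ω) (T ω)}
      = ⋃ w ∈ W, {ω | (M w ω).1 ≤ T ω} ∩ {ω | (M w ω).2 = c} := by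
    ext ω; simp [mem_usedLE, and_left_comm]
  rw [heq]
  exact .biUnion W.countable_toSet fun w hw => (measurableSet_le (hM w hw).fst hT).inter
    ((hM w hw).snd (.of_discrete (s := {c})))

lemma measurable_usedLT (hM : ∀ w ∈ W, Measurable (M w)) (T : ℝ) :
    Measurable fun ω => usedLT W (fun w => M w ω) T := by
  refine measurable_finset_iff.2 fun c => measurableSet_setOfPred.1 ?_
  have heq : {ω | c ∈ usedLT W (fun w => M w ω) T}
      = ⋃ w ∈ W, {ω | (M w ω).1 < T} ∩ {ω | (M w ω).2 = c} := by
    ext ω; simp [mem_usedLT, and_left_comm]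
  rw [heq]
  exact .biUnion W.countable_toSet fun w hw =>
    (measurableSet_lt (hM w hw).fst measurable_const).inter
      ((hM w hw).snd (.of_discrete (s := {c})))

variable [Fintype C] [Nontrivial C]

lemma measurable_colorTime (hM : ∀ w ∈ W, Measurable (M w)) {t : Ω → ℝ} (ht : Measurable t) :
    Measurable fun ω => colorTime (t ω) W fun w => M w ω := by
  refine measurable_of_Ici fun T => ?_
  have heq : (fun ω => colorTime (t ω) W fun w => M w ω) ⁻¹' Set.Ici T
      = {ω | T ≤ t ω} ∩ (fun ω => usedLT W (fun w => M w ω) T) ⁻¹' {U | ¬ Forcing U} := by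
    ext ω; simp [le_colorTime]
  rw [heq]
  exact (measurableSet_le measurable_const ht).inter (measurable_usedLT hM T .of_discrete)

lemma measurable_recolor [AddGroup C] (hM : ∀ w ∈ W, Measurable (M w)) {s : Ω → ℝ × C}
    (hs : Measurable s) : Measurable fun ω => recolor (s ω) W fun w => M w ω := by
  have htime := measurable_colorTime hM hs.fst
  have hpick : Measurable fun p : C × Finset C => pick p.1 p.2 := .of_discrete
  exact htime.prodMk (hpick.comp (hs.snd.prodMk (measurable_usedLE hM htime)))

end Measurability

section UsedColors

variable {ι κ : Type*} {X : ι → Type*} [∀ i, MeasurableSpace (X i)] {ρ : ∀ i, Measure (X i)}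
  [∀ i, IsProbabilityMeasure (ρ i)] {W : Finset κ} {A : κ → Set ι}

lemma measureReal_usedLT_subset {C : Type*} [Fintype C] [DecidableEq C] [MeasurableSpace C]
    [DiscreteMeasurableSpace C] {M : κ → (∀ i, X i) → ℝ × C}
    (hA : (W : Set κ).PairwiseDisjoint A) (hM : ∀ w ∈ W, Measurable[cylinderEvents (A w)] (M w))
    {T r : ℝ} (hr : ∀ w ∈ W, ∀ c,
      (Measure.infinitePi ρ).real {x | (M w x).1 < T ∧ (M w x).2 = c} = r) (S : Finset C) :
    (Measure.infinitePi ρ).real {x | usedLT W (fun w => M w x) T ⊆ S} = (1 - #Sᶜ * r) ^ #W := by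
  have hmeas (w) (hw : w ∈ W) (c : C) :
      MeasurableSet[cylinderEvents (A w)] {x | (M w x).1 < T ∧ (M w x).2 = c} :=
    (measurableSet_lt (hM w hw).fst measurable_const).inter
      ((hM w hw).snd (.of_discrete (s := {c})))
  have hle (w) : cylinderEvents (X := X) (A w) ≤ MeasurableSpace.pi := cylinderEvents_le_pi
  set E : κ → Set (∀ i, X i) := fun w => ⋃ c ∈ Sᶜ, {x | (M w x).1 < T ∧ (M w x).2 = c} with hE
  have hEmeas (w) (hw : w ∈ W) : MeasurableSet[cylinderEvents (A w)] (E w) :=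
    .biUnion Sᶜ.countable_toSet fun c _ => hmeas w hw c
  have hEr (w) (hw : w ∈ W) : (Measure.infinitePi ρ).real (E w) = #Sᶜ * r := by
    rw [hE, measureReal_biUnion_finset _ fun c _ => hle w _ (hmeas w hw c),
      sum_congr rfl fun c _ => hr w hw c, sum_const, nsmul_eq_mul]
    exact fun c _ c' _ hcc' => Set.disjoint_left.2 fun x hx hx' => hcc' (hx.2.symm.trans hx'.2)
  have heq : {x | usedLT W (fun w => M w x) T ⊆ S} = ⋂ w ∈ W, (E w)ᶜ := by
    ext x
    simp only [hE, subset_iff, mem_usedLT, Set.mem_ofPred_eq, Set.mem_iInter, Set.mem_compl_iff,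
      Set.mem_iUnion, mem_compl]
    grind
  rw [heq, measureReal_biInter_of_cylinderEvents ρ W hA fun w hw => (hEmeas w hw).compl,
    prod_congr rfl fun w hw => by
      rw [probReal_compl_eq_one_sub (hle w _ (hEmeas w hw)), hEr w hw], prod_const]

variable {M : κ → (∀ i, X i) → ℝ × Fin 4} {T p : ℝ}

lemma measureReal_of_usedLT (hA : (W : Set κ).PairwiseDisjoint A)
    (hM : ∀ w ∈ W, Measurable[cylinderEvents (A w)] (M w))
    (hp : ∀ w ∈ W, ∀ c, (Measure.infinitePi ρ).real {x | (M w x).1 < T ∧ (M w x).2 = c} = p / 4)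
    {Q : Finset (Fin 4) → Prop} [DecidablePred Q] {a : Finset (Fin 4) → ℤ}
    (ha : ∀ A, (if Q A then 1 else 0) = ∑ S with A ⊆ S, a S) :
    (Measure.infinitePi ρ).real {x | Q (usedLT W (fun w => M w x) T)}
      = ∑ S, a S * (1 - (4 - #S) * (p / 4)) ^ #W := by
  have hmeas : Measurable fun x => usedLT W (fun w => M w x) T :=
    measurable_usedLT (fun w hw => (hM w hw).mono cylinderEvents_le_pi le_rfl) T
  rw [measureReal_eq_sum_subset (fun S => hmeas (measurableSet_singleton S)) ha]
  refine sum_congr rfl fun S _ => ?_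
  rw [measureReal_usedLT_subset hA hM hp, card_compl, Fintype.card_fin, Nat.cast_sub,
    Nat.cast_ofNat]
  exact card_le_univ S

lemma measureReal_not_forcing_usedLT (hA : (W : Set κ).PairwiseDisjoint A)
    (hM : ∀ w ∈ W, Measurable[cylinderEvents (A w)] (M w))
    (hp : ∀ w ∈ W, ∀ c, (Measure.infinitePi ρ).real {x | (M w x).1 < T ∧ (M w x).2 = c} = p / 4)
    (hW : #W = 5) :
    (Measure.infinitePi ρ).real {x | ¬ Forcing (usedLT W (fun w => M w x) T)} = fewProb p := by
  rw [measureReal_of_usedLT hA hM hp ite_not_forcing_eq_sum, ← powerset_univ,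
    sum_powerset_apply_card (fun k => (fewWeight k : ℝ) * (1 - (4 - k) * (p / 4)) ^ #W), hW,
    fewProb]
  simp [sum_range_succ, fewWeight, Nat.choose]
  ring

lemma measureReal_card_usedLT_eq_two (hA : (W : Set κ).PairwiseDisjoint A)
    (hM : ∀ w ∈ W, Measurable[cylinderEvents (A w)] (M w))
    (hp : ∀ w ∈ W, ∀ c, (Measure.infinitePi ρ).real {x | (M w x).1 < T ∧ (M w x).2 = c} = p / 4)
    (hW : #W = 4) (c : Fin 4) :
    (Measure.infinitePi ρ).real
      {x | c ∉ usedLT W (fun w => M w x) T ∧ #(usedLT W (fun w => M w x) T) = 2} = twoProb p := by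
  have hfilter : ({S | c ∉ S} : Finset (Finset (Fin 4))) = ({c}ᶜ : Finset (Fin 4)).powerset := by
    ext S; simp
  rw [measureReal_of_usedLT hA hM hp (ite_card_eq_two_eq_sum c)]
  simp only [Int.cast_ite, Int.cast_zero, ite_mul, zero_mul]
  rw [← sum_filter, hfilter,
    sum_powerset_apply_card (fun k => (fewWeight k : ℝ) * (1 - (4 - k) * (p / 4)) ^ #W), hW,
    twoProb]
  simp [sum_range_succ, fewWeight, Nat.choose, card_compl]
  ring

end UsedColors

section Seeds

open ProbabilityTheory

lemma measurableSet_clock {V C : Type*} [MeasurableSpace C] (v : V) {A : Set ℝ}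
    (hA : MeasurableSet A) :
    MeasurableSet[cylinderEvents {v}] {x : V → ℝ × C | (x v).1 ∈ A} :=
  (measurable_cylinderEvent_apply (Set.mem_singleton v)).fst hA

variable (V C : Type*) [Finite C] [Nonempty C] [MeasurableSpace C] [MeasurableSingletonClass C]

/-- The law of a seed: a uniform clock in `[0, 1)` and an independent uniform preferred colour. -/
noncomputable def seedLaw : Measure (ℝ × C) :=
  (volume.restrict (Set.Ico 0 1)).prod (uniformOn Set.univ)

instance : IsProbabilityMeasure (volume.restrict (Set.Ico (0 : ℝ) 1)) := ⟨by simp⟩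

instance : IsProbabilityMeasure (uniformOn (Set.univ : Set C)) :=
  isProbabilityMeasure_uniformOn Set.finite_univ Set.univ_nonempty

instance : IsProbabilityMeasure (seedLaw C) :=
  inferInstanceAs (IsProbabilityMeasure ((volume.restrict (Set.Ico 0 1)).prod _))

/-- The joint law of independent seeds at the vertices `V`. -/
noncomputable abbrev seedMeasure : Measure (V → ℝ × C) := Measure.infinitePi fun _ => seedLaw C

variable {V C}

lemma measurePreserving_clock (v : V) :
    MeasurePreserving (fun x => (x v).1) (seedMeasure V C) (volume.restrict (Set.Ico 0 1)) :=
  measurePreserving_fst.comp (measurePreserving_eval_infinitePi (fun _ => seedLaw C) v)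

lemma measureReal_clock_mem_Ico (v : V) {a b : ℝ} (ha : 0 ≤ a) (hab : a ≤ b) (hb : b ≤ 1) :
    (seedMeasure V C).real {x | (x v).1 ∈ Set.Ico a b} = b - a := by
  have h := (measurePreserving_clock (C := C) v).measureReal_preimage
    (measurableSet_Ico (a := a) (b := b)).nullMeasurableSet
  rwa [measureReal_restrict_apply measurableSet_Ico,
    Set.inter_eq_left.2 (Set.Ico_subset_Ico ha hb), Real.volume_real_Ico_of_le hab] at h

lemma ae_clock_mem_Ico [Countable V] :
    ∀ᵐ x ∂(seedMeasure V C), ∀ v, (x v).1 ∈ Set.Ico (0 : ℝ) 1 :=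
  ae_all_iff.2 fun v => (measurePreserving_clock v).quasiMeasurePreserving.ae
    (ae_restrict_mem measurableSet_Ico)

lemma measureReal_clock_lt [Countable V] (v : V) {T : ℝ} (hT : T ∈ Set.Icc 0 1) :
    (seedMeasure V C).real {x | (x v).1 < T} = T := by
  have h := measureReal_clock_mem_Ico (C := C) v le_rfl hT.1 hT.2
  rw [sub_zero] at h
  refine (measureReal_congr ?_).trans h
  filter_upwards [ae_clock_mem_Ico] with x hx
  exact propext ⟨fun hlt => ⟨(hx v).1, hlt⟩, And.right⟩

lemma measureReal_clock_ge [Countable V] (v : V) {T : ℝ} (hT : T ∈ Set.Icc 0 1) :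
    (seedMeasure V C).real {x | T ≤ (x v).1} = 1 - T := by
  have h := probReal_compl_eq_one_sub (μ := seedMeasure V C)
    (measurableSet_lt (f := fun x => (x v).1) (by fun_prop) (measurable_const (a := T)))
  simpa only [Set.compl_ofPred, not_lt, measureReal_clock_lt v hT] using h

lemma ae_injective_clock [Countable V] :
    ∀ᵐ x ∂(seedMeasure V C), Function.Injective fun v => (x v).1 := by
  suffices ∀ u v, u ≠ v → ∀ᵐ x ∂(seedMeasure V C), (x u).1 ≠ (x v).1 by
    filter_upwards [ae_all_iff.2 fun u => ae_all_iff.2 fun v => ae_all_iff.2 (this u v)] with x hx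
    exact fun u v h => of_not_not fun huv => hx u v huv h
  intro u v huv
  have hs : MeasurableSet {p : (ℝ × C) × (ℝ × C) | p.1.1 = p.2.1} :=
    measurableSet_eq_fun measurable_fst.fst measurable_snd.fst
  have hnull : ((seedLaw C).prod (seedLaw C)) {p | p.1.1 = p.2.1} = 0 := by
    rw [Measure.measure_prod_null hs]
    refine .of_forall fun s => ?_
    have heq : Prod.mk s ⁻¹' {p : (ℝ × C) × (ℝ × C) | p.1.1 = p.2.1} = {s.1} ×ˢ Set.univ := by
      ext p; simp [eq_comm]
    simp only [heq, seedLaw, Measure.prod_prod]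
    simp
  rw [← Measure.infinitePi_map_eval_prod (P := fun _ : V => seedLaw C) huv,
    Measure.map_apply (by fun_prop) hs] at hnull
  simpa [ae_iff] using hnull

lemma measurePreserving_rotate [AddGroup C] (a : C) :
    MeasurePreserving (fun x v => ((x v).1, a + (x v).2)) (seedMeasure V C) (seedMeasure V C) := by
  have huniform :
      MeasurePreserving (a + ·) (uniformOn (Set.univ : Set C)) (uniformOn Set.univ) := by
    cases nonempty_fintype C
    refine ⟨by fun_prop, Measure.ext fun s hs => ?_⟩
    rw [Measure.map_apply (by fun_prop) hs, uniformOn_univ, uniformOn_univ, measure_preimage_add]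
  have hseed : MeasurePreserving (Prod.map id (a + ·)) (seedLaw C) (seedLaw C) :=
    (MeasurePreserving.id _).prod huniform
  refine ⟨by fun_prop, ?_⟩
  conv_rhs => rw [seedMeasure, ← hseed.map_eq]
  exact Measure.infinitePi_map_pi (fun _ => seedLaw C) fun _ => hseed.measurable

end Seeds

section Branch

variable {V : Type*} {G : SimpleGraph V} {u v w w' : V}

/-- The vertices that can be reached from `v` along a path avoiding `u`; in a tree, for `u` adjacent
to `v`, this is the component of `v` after removing the edge `uv`. -/
def branch (G : SimpleGraph V) (u v : V) : Set V := {y | ∃ p : G.Walk v y, p.IsPath ∧ u ∉ p.support}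

lemma self_mem_branch (h : u ≠ v) : v ∈ branch G u v :=
  ⟨.nil, .nil, by simpa using h⟩

lemma notMem_branch_self : u ∉ branch G u v :=
  fun ⟨p, _, hu⟩ => hu p.end_mem_support

lemma disjoint_singleton_branches (W : Finset V) : Disjoint {v} (⋃ w ∈ W, branch G v w) :=
  Set.disjoint_singleton_left.2 fun h => by
    obtain ⟨w, -, hw⟩ := Set.mem_iUnion₂.1 h
    exact notMem_branch_self hw

lemma walk_eq_of_isPath (hG : G.IsAcyclic) {p q : G.Walk v w} (hp : p.IsPath) (hq : q.IsPath) :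
    p = q :=
  congrArg Subtype.val ((hG.subsingleton_path v w).elim ⟨p, hp⟩ ⟨q, hq⟩)

lemma branch_subset_branch (hG : G.IsAcyclic) (huv : G.Adj u v) (hvw : G.Adj v w) (hne : w ≠ u) :
    branch G v w ⊆ branch G u v := by
  classical
  rintro y ⟨p, hp, hv⟩
  refine ⟨.cons hvw p, hp.cons hv, fun hu => ?_⟩
  have hu' : u ∈ p.support := by simpa [huv.ne] using hu
  have hpath : (SimpleGraph.Walk.cons hvw.symm (.cons huv.symm .nil)).IsPath := by
    simp [SimpleGraph.Walk.cons_isPath_iff, hvw.ne', huv.ne', hne]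
  refine hv (p.support_takeUntil_subset_support hu' ?_)
  rw [walk_eq_of_isPath hG (hp.takeUntil hu') hpath]
  simp

lemma disjoint_branch (hG : G.IsAcyclic) (hw : G.Adj v w) (hw' : G.Adj v w') (hne : w ≠ w') :
    Disjoint (branch G v w) (branch G v w') := by
  rw [Set.disjoint_left]
  rintro y ⟨p, hp, hv⟩ ⟨p', hp', hv'⟩
  have heq : SimpleGraph.Walk.cons hw p = .cons hw' p' :=
    walk_eq_of_isPath hG (hp.cons hv) (hp'.cons hv')
  exact hne (SimpleGraph.Walk.cons.inj heq).1

lemma disjoint_branch_symm (hG : G.IsAcyclic) (h : G.Adj u v) :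
    Disjoint (branch G u v) (branch G v u) := by
  rw [Set.disjoint_left]
  rintro y ⟨p, hp, hu⟩ ⟨p', hp', hv⟩
  rw [← walk_eq_of_isPath hG (hp.cons (h := h) hu) hp'] at hv
  simp at hv

lemma pairwiseDisjoint_branch (hG : G.IsAcyclic) [Fintype (G.neighborSet v)] {W : Finset V}
    (hW : W ⊆ G.neighborFinset v) : (W : Set V).PairwiseDisjoint (branch G v) :=
  fun w hw w' hw' hne => disjoint_branch hG ((G.mem_neighborFinset v w).1 (hW hw))
    ((G.mem_neighborFinset v w').1 (hW hw')) hne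

lemma disjoint_branch_union (hG : G.IsAcyclic) [Fintype (G.neighborSet v)] {W : Finset V}
    (hvw : G.Adj v w) (hW : W ⊆ G.neighborFinset v) (hw : w ∉ W) :
    Disjoint (branch G v w) ({v} ∪ ⋃ w' ∈ W, branch G v w') := by
  rw [Set.disjoint_union_right, Set.disjoint_singleton_right]
  refine ⟨notMem_branch_self, Set.disjoint_iUnion₂_right.2 fun w' hw' => ?_⟩
  exact disjoint_branch hG hvw ((G.mem_neighborFinset v w').1 (hW hw'))
    (ne_of_mem_of_not_mem hw' hw).symm

lemma neighborFinset_symm [G.LocallyFinite] (φ : G ≃g G) (v : V) :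
    G.neighborFinset (φ.symm v) = (G.neighborFinset v).map φ.symm.toEquiv.toEmbedding := by
  ext w
  rw [mem_map_equiv, G.mem_neighborFinset, G.mem_neighborFinset, ← φ.map_adj_iff,
    φ.apply_symm_apply]
  rfl

end Branch

section Message

variable {V : Type*} [DecidableEq V] (G : SimpleGraph V) [G.LocallyFinite] {τ C : Type*}
  [LinearOrder τ] [DecidableEq C] [Fintype C] [AddGroup C] (x : V → τ × C)

/-- The time and colour that `v` reports to `u`: those the update rule assigns to `v` after `n`
rounds of communication when `u` is ignored. -/
noncomputable def message : ℕ → V → V → τ × C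
  | 0, _, v => x v
  | n + 1, u, v => recolor (x v) ((G.neighborFinset v).erase u) fun w => message n v w

/-- The colour of `v` after `n` rounds of communication. -/
noncomputable def vertexColor (n : ℕ) (v : V) : C :=
  (recolor (x v) (G.neighborFinset v) (message G x n v)).2

variable {G x} {u v : V}

lemma exists_message_time_eq (hG : G.IsAcyclic) (huv : G.Adj u v) (n : ℕ) :
    ∃ y ∈ branch G u v, (message G x n u v).1 = (x y).1 := by
  induction n generalizing u v with
  | zero => exact ⟨v, self_mem_branch huv.ne, rfl⟩
  | succ n ih =>
    rcases colorTime_eq_or (x v).1 ((G.neighborFinset v).erase u) (message G x n v)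
      with h | ⟨w, hw, h, -⟩
    · exact ⟨v, self_mem_branch huv.ne, h⟩
    · obtain ⟨hwu, hvw⟩ := mem_erase.1 hw
      rw [G.mem_neighborFinset] at hvw
      obtain ⟨y, hy, hyw⟩ := ih hvw
      exact ⟨y, branch_subset_branch hG huv hvw hwu hy, h.trans hyw⟩

lemma message_time_ne (hG : G.IsAcyclic) (hx : Function.Injective fun v => (x v).1) {u' v' : V}
    (huv : G.Adj u v) (huv' : G.Adj u' v') (h : Disjoint (branch G u v) (branch G u' v')) (n : ℕ) :
    (message G x n u v).1 ≠ (message G x n u' v').1 := by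
  obtain ⟨y, hy, ht⟩ := exists_message_time_eq (x := x) hG huv n
  obtain ⟨y', hy', ht'⟩ := exists_message_time_eq (x := x) hG huv' n
  rw [ht, ht']
  exact hx.ne (h.ne_of_mem hy hy')

lemma injOn_message_time (hG : G.IsAcyclic) (hx : Function.Injective fun v => (x v).1) (n : ℕ)
    (v : V) : Set.InjOn (fun w => (message G x n v w).1) (G.neighborFinset v) := by
  intro w hw w' hw' h
  rw [SimpleGraph.coe_neighborFinset, SimpleGraph.mem_neighborSet] at hw hw'
  by_contra hne
  exact message_time_ne hG hx hw hw' (disjoint_branch hG hw hw' hne) n h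

variable [Nontrivial C]

variable (G x) in
lemma message_rotate (a : C) (n : ℕ) (u v : V) :
    message G (fun v => ((x v).1, a + (x v).2)) n u v
      = ((message G x n u v).1, a + (message G x n u v).2) := by
  induction n generalizing u v with
  | zero => rfl
  | succ n ih => simp only [message, ih, recolor_add_left]

variable (x) in
lemma message_comp_iso (φ : G ≃g G) (n : ℕ) (u v : V) :
    message G (fun u => x (φ.symm u)) n u v = message G x n (φ.symm u) (φ.symm v) := by
  induction n generalizing u v with
  | zero => rfl
  | succ n ih =>
    have hmap : (G.neighborFinset (φ.symm v)).erase (φ.symm u)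
        = ((G.neighborFinset v).erase u).map φ.symm.toEquiv.toEmbedding := by
      rw [neighborFinset_symm, map_erase]
      rfl
    simp only [message, ih, hmap, recolor_map]
    rfl

variable (x) in
lemma vertexColor_comp_iso (φ : G ≃g G) (n : ℕ) (v : V) :
    vertexColor G (fun u => x (φ.symm u)) n v = vertexColor G x n (φ.symm v) := by
  simp only [vertexColor, neighborFinset_symm, recolor_map]
  congr 2
  exact funext fun w => message_comp_iso x φ n v w

/-- The vertex that is coloured earlier disregards the other one, which then avoids its colour. -/
lemma vertexColor_ne_of_message_time_lt (hG : G.IsAcyclic)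
    (hx : Function.Injective fun v => (x v).1) {n : ℕ} (huv : G.Adj u v)
    (hu : message G x (n + 1) v u = message G x n v u)
    (hv : message G x (n + 1) u v = message G x n u v)
    (hlt : (message G x n u v).1 < (message G x n v u).1) :
    vertexColor G x n u ≠ vertexColor G x n v := by
  have hcolor : recolor (x v) (G.neighborFinset v) (message G x n v) = message G x n u v := by
    rw [← recolor_erase ((congrArg Prod.fst hv).trans_lt hlt)]
    exact hv
  have htime : (message G x n u v).1 ≤ (recolor (x u) (G.neighborFinset u) (message G x n u)).1 :=
    le_colorTime_of_le_colorTime_erase (hlt.le.trans (congrArg Prod.fst hu).ge)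
  intro h
  refine recolor_notMem_usedLE (x u) (injOn_message_time hG hx n u) (mem_usedLE.2
    ⟨v, (G.mem_neighborFinset u v).2 huv, htime, ?_⟩)
  rw [← hcolor]
  exact h.symm

lemma vertexColor_ne_of_message_succ_eq (hG : G.IsAcyclic)
    (hx : Function.Injective fun v => (x v).1) {n : ℕ} (huv : G.Adj u v)
    (hu : message G x (n + 1) v u = message G x n v u)
    (hv : message G x (n + 1) u v = message G x n u v) :
    vertexColor G x n u ≠ vertexColor G x n v := by
  have hne := message_time_ne hG hx huv huv.symm (disjoint_branch_symm hG huv) n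
  rcases hne.lt_or_gt with h | h
  · exact vertexColor_ne_of_message_time_lt hG hx huv hu hv h
  · exact (vertexColor_ne_of_message_time_lt hG hx huv.symm hv hu h).symm

end Message

section MessageLaw

variable {V : Type*} [DecidableEq V] {G : SimpleGraph V} [G.LocallyFinite] {u v : V}

section Colors

variable {C : Type*} [Fintype C] [DecidableEq C] [Nontrivial C] [AddGroup C] [MeasurableSpace C]
  [DiscreteMeasurableSpace C]

lemma measurable_message_branch (hG : G.IsAcyclic) (huv : G.Adj u v) (n : ℕ) :
    Measurable[cylinderEvents (branch G u v)] fun x : V → ℝ × C => message G x n u v := by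
  induction n generalizing u v with
  | zero => exact measurable_cylinderEvent_apply (self_mem_branch huv.ne)
  | succ n ih =>
    refine @measurable_recolor _ _ _ (cylinderEvents _) _ _ _ _ _ _ _ _ (fun w hw => ?_) _
      (measurable_cylinderEvent_apply (self_mem_branch huv.ne))
    obtain ⟨hwu, hvw⟩ := mem_erase.1 hw
    rw [G.mem_neighborFinset] at hvw
    exact (ih hvw).mono (cylinderEvents_mono (branch_subset_branch hG huv hvw hwu)) le_rfl

lemma measurable_message (n : ℕ) (u v : V) :
    Measurable fun x : V → ℝ × C => message G x n u v := by
  induction n generalizing u v with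
  | zero => exact measurable_pi_apply v
  | succ n ih => exact measurable_recolor (fun w _ => ih v w) (measurable_pi_apply v)

lemma measurable_vertexColor (n : ℕ) (v : V) :
    Measurable fun x : V → ℝ × C => vertexColor G x n v :=
  (measurable_recolor (fun w _ => measurable_message n v w) (measurable_pi_apply v)).snd

lemma measureReal_message_lt_and_eq (n : ℕ) (u v : V) (T : ℝ) (c : C) :
    (seedMeasure V C).real {x | (message G x n u v).1 < T ∧ (message G x n u v).2 = c}
      = (seedMeasure V C).real {x | (message G x n u v).1 < T} / Fintype.card C := by
  set E : C → Set (V → ℝ × C) := fun b =>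
    {x | (message G x n u v).1 < T ∧ (message G x n u v).2 = b} with hE
  have hm := measurable_message (G := G) (C := C) n u v
  have hmeas (b : C) : MeasurableSet (E b) :=
    (measurableSet_lt hm.fst measurable_const).inter (hm.snd (.of_discrete (s := {b})))
  have hconst (b : C) : (seedMeasure V C).real (E b) = (seedMeasure V C).real (E c) := by
    have h := (measurePreserving_rotate (V := V) (c - b)).measureReal_preimage
      (hmeas c).nullMeasurableSet
    have hb (y : C) : c - b + y = c ↔ y = b := by
      rw [sub_eq_add_neg, add_assoc, add_eq_left, neg_add_eq_zero, eq_comm]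
    rw [← h]
    simp [hE, message_rotate, hb]
  have hunion : {x | (message G x n u v).1 < T} = ⋃ b ∈ (univ : Finset C), E b := by
    ext x; simp [hE]
  rw [hunion, measureReal_biUnion_finset _ fun b _ => hmeas b, sum_congr rfl fun b _ => hconst b]
  · rw [sum_const, card_univ, nsmul_eq_mul, mul_div_cancel_left₀ _ (by simp)]
  · exact fun b _ b' _ hbb' => Set.disjoint_left.2 fun x hx hx' => hbb' (hx.2.symm.trans hx'.2)

end Colors

lemma measurable_usedLT_message (hG : G.IsAcyclic) {W : Finset V} (hW : W ⊆ G.neighborFinset v)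
    (n : ℕ) (T : ℝ) : Measurable[cylinderEvents (⋃ w ∈ W, branch G v w)]
      fun x : V → ℝ × Fin 4 => usedLT W (message G x n v) T := by
  refine @measurable_usedLT _ _ _ (cylinderEvents _) _ _ _ _ _ (fun w hw => ?_) T
  exact (measurable_message_branch hG ((G.mem_neighborFinset v w).1 (hW hw)) n).mono
    (cylinderEvents_mono (Set.subset_biUnion_of_mem (u := branch G v) hw)) le_rfl

lemma measureReal_message_lt [Countable V] (hG : G.IsAcyclic) (hreg : G.IsRegularOfDegree 6) (n : ℕ)
    (huv : G.Adj u v) {T : ℝ} (hT : T ∈ Set.Icc 0 1) :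
    (seedMeasure V (Fin 4)).real {x | (message G x n u v).1 < T} = messageCDF n T := by
  induction n generalizing u v with
  | zero => exact measureReal_clock_lt v hT
  | succ n ih =>
    set W := (G.neighborFinset v).erase u with hW
    have hsub : W ⊆ G.neighborFinset v := erase_subset _ _
    have hadj (w) (hw : w ∈ W) : G.Adj v w := (G.mem_neighborFinset v w).1 (hsub hw)
    have hcard : #W = 5 := by
      rw [hW, card_erase_of_mem ((G.mem_neighborFinset v u).2 huv.symm),
        G.card_neighborFinset_eq_degree, hreg v]
    have heq : {x | (message G x (n + 1) u v).1 < T}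
        = ({x : V → ℝ × Fin 4 | T ≤ (x v).1} ∩
          {x | ¬ Forcing (usedLT W (message G x n v) T)})ᶜ := by
      ext x
      simp only [Set.mem_ofPred_eq, Set.mem_compl_iff, Set.mem_inter_iff, ← le_colorTime, not_le]
      rfl
    have hclock : MeasurableSet[cylinderEvents {v}] {x : V → ℝ × Fin 4 | T ≤ (x v).1} :=
      measurableSet_clock v measurableSet_Ici
    have hused : MeasurableSet[cylinderEvents (⋃ w ∈ W, branch G v w)]
        {x : V → ℝ × Fin 4 | ¬ Forcing (usedLT W (message G x n v) T)} :=
      measurable_usedLT_message hG hsub n T (.of_discrete (s := {U | ¬ Forcing U}))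
    rw [heq, probReal_compl_eq_one_sub ((cylinderEvents_le_pi _ hclock).inter
      (cylinderEvents_le_pi _ hused)), messageCDF, ← measureReal_clock_ge (C := Fin 4) v hT]
    congr 1
    refine (measureReal_inter_of_cylinderEvents _ (disjoint_singleton_branches W) hclock
      hused).trans (congrArg _ ?_)
    refine measureReal_not_forcing_usedLT (pairwiseDisjoint_branch hG hsub)
      (fun w hw => measurable_message_branch hG (hadj w hw) n) (fun w hw c => ?_) hcard
    rw [measureReal_message_lt_and_eq, ih (hadj w hw), Fintype.card_fin, Nat.cast_ofNat]

end MessageLaw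

section Contraction

lemma measurableSet_discrepancyIn {Ω C : Type*} {_ : MeasurableSpace Ω} [MeasurableSpace C]
    [Countable C] [MeasurableSingletonClass C] {m m' : Ω → ℝ × C} (hm : Measurable m)
    (hm' : Measurable m') {I : Set ℝ} (hI : MeasurableSet I) :
    MeasurableSet {x | DiscrepancyIn I (m x) (m' x)} :=
  (measurableSet_eq_fun hm hm').compl.inter (hm.fst.min hm'.fst hI)

variable {V : Type*} [DecidableEq V] {G : SimpleGraph V} [G.LocallyFinite] {u v w : V}
  {W : Finset V} {I : Set ℝ}

/-- The seeds for which the messages of `w` to `v` after `a` and `b` rounds differ in one of the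
ways that can make the messages of `v` differ in `[T₀, T₁)` a round later, where `W` is the set of
other vertices that `v` listens to. -/
def childDiscrepancy (G : SimpleGraph V) [G.LocallyFinite] (W : Finset V) (T₀ T₁ : ℝ) (a b : ℕ)
    (v w : V) : Set (V → ℝ × Fin 4) :=
  {x | DiscrepancyIn (Set.Iio T₀) (message G x a v w) (message G x b v w)} ∪
    ({x | DiscrepancyIn (Set.Ico T₀ T₁) (message G x a v w) (message G x b v w)} ∩
        {x | Busy (Set.Ico T₀ T₁) (x v) W (message G x a v)} ∪
      {x | DiscrepancyFrom (Set.Ico T₀ T₁) (message G x a v w) (message G x b v w)} ∩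
        {x | Pivotal T₀ (x v) W (message G x a v) (message G x a v w).2})

lemma measurableSet_discrepancyIn_message (hG : G.IsAcyclic) (huv : G.Adj u v)
    (hI : MeasurableSet I) (a b : ℕ) : MeasurableSet[cylinderEvents (branch G u v)]
      {x : V → ℝ × Fin 4 | DiscrepancyIn I (message G x a u v) (message G x b u v)} :=
  measurableSet_discrepancyIn (measurable_message_branch hG huv a)
    (measurable_message_branch hG huv b) hI

lemma measurableSet_discrepancyFrom_message (hG : G.IsAcyclic) (huv : G.Adj u v)
    (hI : MeasurableSet I) (a b : ℕ) : MeasurableSet[cylinderEvents (branch G u v)]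
      {x : V → ℝ × Fin 4 | DiscrepancyFrom I (message G x a u v) (message G x b u v)} :=
  (measurableSet_discrepancyIn_message hG huv hI a b).inter
    ((measurable_message_branch hG huv a).fst hI)

lemma measurableSet_busy (hG : G.IsAcyclic) (hW : W ⊆ G.neighborFinset v) (hI : MeasurableSet I)
    (n : ℕ) : MeasurableSet[cylinderEvents ({v} ∪ ⋃ w ∈ W, branch G v w)]
      {x : V → ℝ × Fin 4 | Busy I (x v) W (message G x n v)} := by
  have heq : {x : V → ℝ × Fin 4 | Busy I (x v) W (message G x n v)}
      = {x | (x v).1 ∈ I} ∪ ⋃ w ∈ W, {x | (message G x n v w).1 ∈ I} := by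
    ext x; simp [Busy]
  rw [heq]
  refine .union (cylinderEvents_mono Set.subset_union_left _ (measurableSet_clock v hI)) ?_
  refine .biUnion W.countable_toSet fun w hw => cylinderEvents_mono
    (Set.subset_union_of_subset_right (Set.subset_biUnion_of_mem (u := branch G v) hw) _) _
    ((measurable_message_branch hG ((G.mem_neighborFinset v w).1 (hW hw)) n).fst hI)

lemma measurableSet_card_usedLT (hG : G.IsAcyclic) (hW : W ⊆ G.neighborFinset v) (n : ℕ) (T : ℝ)
    (c : Fin 4) : MeasurableSet[cylinderEvents (⋃ w ∈ W, branch G v w)] {x : V → ℝ × Fin 4 |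
      c ∉ usedLT W (message G x n v) T ∧ #(usedLT W (message G x n v) T) = 2} :=
  measurable_usedLT_message hG hW n T (.of_discrete (s := {U | c ∉ U ∧ #U = 2}))

lemma pivotal_eq_inter (n : ℕ) (T : ℝ) (c : Fin 4) :
    {x | Pivotal T (x v) W (message G x n v) c} = {x | T ≤ (x v).1} ∩
      {x | c ∉ usedLT W (message G x n v) T ∧ #(usedLT W (message G x n v) T) = 2} := by
  ext x; simp [Pivotal]

lemma measurableSet_pivotal (hG : G.IsAcyclic) (hW : W ⊆ G.neighborFinset v) (n : ℕ) (T : ℝ)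
    (c : Fin 4) : MeasurableSet[cylinderEvents ({v} ∪ ⋃ w ∈ W, branch G v w)]
      {x : V → ℝ × Fin 4 | Pivotal T (x v) W (message G x n v) c} := by
  rw [pivotal_eq_inter]
  exact .inter
    (cylinderEvents_mono Set.subset_union_left _ (measurableSet_clock v measurableSet_Ici))
    (cylinderEvents_mono Set.subset_union_right _ (measurableSet_card_usedLT hG hW n T c))

lemma measureReal_discrepancyIn_le {a b : ℕ} {r : ℝ}
    (hab : (seedMeasure V (Fin 4)).real
      {x | DiscrepancyFrom I (message G x a u v) (message G x b u v)} ≤ r)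
    (hba : (seedMeasure V (Fin 4)).real
      {x | DiscrepancyFrom I (message G x b u v) (message G x a u v)} ≤ r) :
    (seedMeasure V (Fin 4)).real
      {x | DiscrepancyIn I (message G x a u v) (message G x b u v)} ≤ 2 * r := by
  have hsub : {x : V → ℝ × Fin 4 | DiscrepancyIn I (message G x a u v) (message G x b u v)}
      ⊆ {x | DiscrepancyFrom I (message G x a u v) (message G x b u v)} ∪
        {x | DiscrepancyFrom I (message G x b u v) (message G x a u v)} :=
    fun x hx => DiscrepancyIn.from_or_from hx
  calc _ ≤ _ := measureReal_mono hsub (measure_ne_top _ _)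
    _ ≤ _ := measureReal_union_le _ _
    _ ≤ 2 * r := by linarith

variable [Countable V] {T₀ T₁ : ℝ}

lemma measureReal_message_mem_Ico_le (hG : G.IsAcyclic) (hreg : G.IsRegularOfDegree 6) (n : ℕ)
    (huv : G.Adj u v) (h₀ : 0 ≤ T₀) (h₀₁ : T₀ ≤ T₁) (h₁ : T₁ ≤ 1) :
    (seedMeasure V (Fin 4)).real {x | (message G x n u v).1 ∈ Set.Ico T₀ T₁} ≤ 5 * (T₁ - T₀) := by
  have heq : {x : V → ℝ × Fin 4 | (message G x n u v).1 ∈ Set.Ico T₀ T₁}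
      = {x | (message G x n u v).1 < T₁} \ {x | (message G x n u v).1 < T₀} := by
    ext x; simp [and_comm]
  have hsub : {x : V → ℝ × Fin 4 | (message G x n u v).1 < T₀} ⊆ {x | (message G x n u v).1 < T₁} :=
    fun x hx => lt_of_lt_of_le hx h₀₁
  rw [heq,
    measureReal_sdiff hsub (measurableSet_lt (measurable_message n u v).fst measurable_const),
    measureReal_message_lt hG hreg n huv ⟨h₀.trans h₀₁, h₁⟩,
    measureReal_message_lt hG hreg n huv ⟨h₀, h₀₁.trans h₁⟩]
  exact messageCDF_sub_le n h₀ h₀₁ h₁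

lemma measureReal_busy_le (hG : G.IsAcyclic) (hreg : G.IsRegularOfDegree 6) (n : ℕ)
    (hW : W ⊆ G.neighborFinset v) (h₀ : 0 ≤ T₀) (h₀₁ : T₀ ≤ T₁) (h₁ : T₁ ≤ 1) :
    (seedMeasure V (Fin 4)).real {x | Busy (Set.Ico T₀ T₁) (x v) W (message G x n v)}
      ≤ (1 + 5 * #W) * (T₁ - T₀) := by
  have hsub : {x : V → ℝ × Fin 4 | Busy (Set.Ico T₀ T₁) (x v) W (message G x n v)}
      ⊆ {x | (x v).1 ∈ Set.Ico T₀ T₁} ∪ ⋃ w ∈ W, {x | (message G x n v w).1 ∈ Set.Ico T₀ T₁} :=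
    fun x hx => hx.imp id fun ⟨w, hw, h⟩ => Set.mem_biUnion hw h
  calc _ ≤ _ := measureReal_mono hsub (measure_ne_top _ _)
    _ ≤ _ := measureReal_union_le _ _
    _ ≤ (T₁ - T₀) + ∑ w ∈ W, 5 * (T₁ - T₀) := by
      refine add_le_add (measureReal_clock_mem_Ico v h₀ h₀₁ h₁).le
        ((measureReal_biUnion_finset_le _ _).trans (sum_le_sum fun w hw => ?_))
      exact measureReal_message_mem_Ico_le hG hreg n ((G.mem_neighborFinset v w).1 (hW hw))
        h₀ h₀₁ h₁
    _ = _ := by rw [sum_const, nsmul_eq_mul]; ring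

lemma measureReal_pivotal_le (hG : G.IsAcyclic) (hreg : G.IsRegularOfDegree 6) (n : ℕ)
    (hW : W ⊆ G.neighborFinset v) (hcard : #W = 4) {T : ℝ} (hT : T ∈ Set.Icc 0 1) (c : Fin 4) :
    (seedMeasure V (Fin 4)).real {x | Pivotal T (x v) W (message G x n v) c} ≤ 4 / 25 := by
  have hadj (w) (hw : w ∈ W) : G.Adj v w := (G.mem_neighborFinset v w).1 (hW hw)
  have htwo := measureReal_card_usedLT_eq_two (ρ := fun _ : V => seedLaw (Fin 4))
    (T := T) (p := messageCDF n T) (pairwiseDisjoint_branch hG hW)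
    (fun w hw => measurable_message_branch hG (hadj w hw) n)
    (fun w hw b => by
      rw [measureReal_message_lt_and_eq, measureReal_message_lt hG hreg n (hadj w hw) hT,
        Fintype.card_fin, Nat.cast_ofNat]) hcard c
  have hclock : MeasurableSet[cylinderEvents {v}] {x : V → ℝ × Fin 4 | T ≤ (x v).1} :=
    measurableSet_clock v measurableSet_Ici
  rw [pivotal_eq_inter, measureReal_inter_of_cylinderEvents _ (disjoint_singleton_branches W)
    hclock (measurableSet_card_usedLT hG hW n T c)]
  refine (congrArg₂ (· * ·) (measureReal_clock_ge v hT) htwo).trans_le ?_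
  linarith [twoProb_messageCDF_le n hT]

/-- A discrepancy at `v w` is independent of what `v` sees on its other branches `W`. -/
lemma measureReal_discrepancyIn_inter_busy_le (hG : G.IsAcyclic) (hreg : G.IsRegularOfDegree 6)
    (a b : ℕ) (hvw : G.Adj v w) (hW : W ⊆ G.neighborFinset v) (hw : w ∉ W) (hcard : #W = 4)
    (h₀ : 0 ≤ T₀) (h₀₁ : T₀ ≤ T₁) (h₁ : T₁ ≤ 1) :
    (seedMeasure V (Fin 4)).real
        ({x | DiscrepancyIn (Set.Ico T₀ T₁) (message G x a v w) (message G x b v w)} ∩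
          {x | Busy (Set.Ico T₀ T₁) (x v) W (message G x a v)})
      ≤ (seedMeasure V (Fin 4)).real
          {x | DiscrepancyIn (Set.Ico T₀ T₁) (message G x a v w) (message G x b v w)}
        * (21 * (T₁ - T₀)) := by
  rw [measureReal_inter_of_cylinderEvents _ (disjoint_branch_union hG hvw hW hw)
    (measurableSet_discrepancyIn_message hG hvw measurableSet_Ico a b)
    (measurableSet_busy hG hW measurableSet_Ico a)]
  refine mul_le_mul_of_nonneg_left ?_ measureReal_nonneg
  refine (measureReal_busy_le hG hreg a hW h₀ h₀₁ h₁).trans_eq ?_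
  rw [hcard]
  norm_num

lemma measureReal_discrepancyFrom_inter_pivotal_le (hG : G.IsAcyclic)
    (hreg : G.IsRegularOfDegree 6) (a b : ℕ) (hvw : G.Adj v w) (hW : W ⊆ G.neighborFinset v)
    (hw : w ∉ W) (hcard : #W = 4) (hI : MeasurableSet I) {T : ℝ} (hT : T ∈ Set.Icc 0 1) :
    (seedMeasure V (Fin 4)).real
        ({x | DiscrepancyFrom I (message G x a v w) (message G x b v w)} ∩
          {x | Pivotal T (x v) W (message G x a v) (message G x a v w).2})
      ≤ (seedMeasure V (Fin 4)).real
          {x | DiscrepancyFrom I (message G x a v w) (message G x b v w)} * (4 / 25) :=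
  measureReal_inter_fiber_le cylinderEvents_le_pi
    (indep_cylinderEvents _ (disjoint_branch_union hG hvw hW hw))
    (measurableSet_discrepancyFrom_message hG hvw hI a b) (measurable_message_branch hG hvw a).snd
    (A := fun c => {x | Pivotal T (x v) W (message G x a v) c})
    (measurableSet_pivotal hG hW a T) (measureReal_pivotal_le hG hreg a hW hcard hT)

lemma measureReal_childDiscrepancy_le (hG : G.IsAcyclic) (hreg : G.IsRegularOfDegree 6)
    {a b : ℕ} (hvw : G.Adj v w) (hW : W ⊆ G.neighborFinset v) (hw : w ∉ W) (hcard : #W = 4)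
    (h₀ : 0 ≤ T₀) (h₀₁ : T₀ ≤ T₁) (h₁ : T₁ ≤ 1) {p r : ℝ}
    (hearly : (seedMeasure V (Fin 4)).real
      {x | DiscrepancyIn (Set.Iio T₀) (message G x a v w) (message G x b v w)} ≤ p)
    (hab : (seedMeasure V (Fin 4)).real
      {x | DiscrepancyFrom (Set.Ico T₀ T₁) (message G x a v w) (message G x b v w)} ≤ r)
    (hba : (seedMeasure V (Fin 4)).real
      {x | DiscrepancyFrom (Set.Ico T₀ T₁) (message G x b v w) (message G x a v w)} ≤ r) :
    (seedMeasure V (Fin 4)).real (childDiscrepancy G W T₀ T₁ a b v w)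
      ≤ p + (42 * (T₁ - T₀) + 4 / 25) * r := by
  have hbusy := measureReal_discrepancyIn_inter_busy_le hG hreg a b hvw hW hw hcard h₀ h₀₁ h₁
  have hpivotal := measureReal_discrepancyFrom_inter_pivotal_le hG hreg a b hvw hW hw hcard
    (measurableSet_Ico (a := T₀) (b := T₁)) ⟨h₀, h₀₁.trans h₁⟩
  have hlength : 0 ≤ 21 * (T₁ - T₀) := mul_nonneg (by norm_num) (sub_nonneg.2 h₀₁)
  calc _ ≤ _ := measureReal_union_le _ _
    _ ≤ _ := add_le_add hearly (measureReal_union_le _ _)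
    _ ≤ p + (2 * r * (21 * (T₁ - T₀)) + r * (4 / 25)) := by
      refine add_le_add_right (add_le_add (hbusy.trans ?_) (hpivotal.trans ?_)) _
      · exact mul_le_mul_of_nonneg_right (measureReal_discrepancyIn_le hab hba) hlength
      · gcongr
    _ = _ := by ring

/-- One round of communication multiplies the probability of a discrepancy in a short window by
roughly `5 * (4 / 25) = 4 / 5`, up to a contribution of the earlier discrepancies. -/
lemma measureReal_discrepancyFrom_succ_le (hG : G.IsAcyclic) (hreg : G.IsRegularOfDegree 6)
    {a b : ℕ} (huv : G.Adj u v) (h₀ : 0 ≤ T₀) (h₀₁ : T₀ ≤ T₁) (h₁ : T₁ ≤ 1) {p r : ℝ}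
    (hearly : ∀ w, G.Adj v w → (seedMeasure V (Fin 4)).real
      {x | DiscrepancyIn (Set.Iio T₀) (message G x a v w) (message G x b v w)} ≤ p)
    (hab : ∀ w, G.Adj v w → (seedMeasure V (Fin 4)).real
      {x | DiscrepancyFrom (Set.Ico T₀ T₁) (message G x a v w) (message G x b v w)} ≤ r)
    (hba : ∀ w, G.Adj v w → (seedMeasure V (Fin 4)).real
      {x | DiscrepancyFrom (Set.Ico T₀ T₁) (message G x b v w) (message G x a v w)} ≤ r) :
    (seedMeasure V (Fin 4)).real {x | DiscrepancyFrom (Set.Ico T₀ T₁)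
        (message G x (a + 1) u v) (message G x (b + 1) u v)}
      ≤ 5 * p + (210 * (T₁ - T₀) + 4 / 5) * r := by
  set W := (G.neighborFinset v).erase u with hW
  have hcard : #W = 5 := by
    rw [hW, card_erase_of_mem ((G.mem_neighborFinset v u).2 huv.symm),
      G.card_neighborFinset_eq_degree, hreg v]
  have hchild (w) (hw : w ∈ W) :
      (seedMeasure V (Fin 4)).real (childDiscrepancy G (W.erase w) T₀ T₁ a b v w)
        ≤ p + (42 * (T₁ - T₀) + 4 / 25) * r := by
    have hvw : G.Adj v w := (G.mem_neighborFinset v w).1 (mem_of_mem_erase hw)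
    exact measureReal_childDiscrepancy_le hG hreg hvw
      ((erase_subset _ _).trans (erase_subset _ _)) (notMem_erase w W)
      (by rw [card_erase_of_mem hw, hcard]) h₀ h₀₁ h₁ (hearly w hvw) (hab w hvw) (hba w hvw)
  have hsub : {x | DiscrepancyFrom (Set.Ico T₀ T₁) (message G x (a + 1) u v)
      (message G x (b + 1) u v)} ⊆ ⋃ w ∈ W, childDiscrepancy G (W.erase w) T₀ T₁ a b v w :=
    fun x hx => Set.mem_iUnion₂.2 <| by
      obtain ⟨w, hw, h⟩ := DiscrepancyFrom.exists_of_recolor hx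
      exact ⟨w, hw, h⟩
  calc _ ≤ _ := measureReal_mono hsub (measure_ne_top _ _)
    _ ≤ _ := (measureReal_biUnion_finset_le _ _).trans (sum_le_sum hchild)
    _ = _ := by rw [sum_const, hcard, nsmul_eq_mul]; push_cast; ring

end Contraction

section Stabilization

open Filter

lemma DiscrepancyIn.exists_window {C : Type*} {m m' : ℝ × C} {N k : ℕ} (hN : 0 < N)
    (h : DiscrepancyIn (Set.Iio (k / N : ℝ)) m m') (hm : 0 ≤ m.1) (hm' : 0 ≤ m'.1) :
    ∃ j < k, DiscrepancyIn (Set.Ico (j / N : ℝ) ((j + 1) / N)) m m' := by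
  obtain ⟨hne, hlt : min m.1 m'.1 < k / N⟩ := h
  have hN' : (0 : ℝ) < N := Nat.cast_pos.2 hN
  have hnonneg : 0 ≤ min m.1 m'.1 * N := mul_nonneg (le_min hm hm') hN'.le
  refine ⟨⌊min m.1 m'.1 * N⌋₊, (Nat.floor_lt hnonneg).2 ((lt_div_iff₀ hN').1 hlt), hne, ?_, ?_⟩
  · exact (div_le_iff₀ hN').2 (Nat.floor_le hnonneg)
  · exact (lt_div_iff₀ hN').2 (Nat.lt_floor_add_one _)

variable {V : Type*} [DecidableEq V] [Countable V] {G : SimpleGraph V} [G.LocallyFinite] {u v : V}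

lemma ae_message_time_mem_Ico (hG : G.IsAcyclic) (huv : G.Adj u v) :
    ∀ᵐ x ∂(seedMeasure V (Fin 4)), ∀ n, (message G x n u v).1 ∈ Set.Ico 0 1 := by
  filter_upwards [ae_clock_mem_Ico] with x hx n
  obtain ⟨y, -, hy⟩ := exists_message_time_eq (x := x) hG huv n
  exact hy ▸ hx y

lemma measureReal_discrepancyIn_Iio_le (hG : G.IsAcyclic) (huv : G.Adj u v) {N : ℕ} (hN : 0 < N)
    (k a b : ℕ) {r : ℕ → ℝ}
    (hr : ∀ j < k, (seedMeasure V (Fin 4)).real {x | DiscrepancyIn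
      (Set.Ico (j / N : ℝ) ((j + 1) / N)) (message G x a u v) (message G x b u v)} ≤ r j) :
    (seedMeasure V (Fin 4)).real {x | DiscrepancyIn (Set.Iio (k / N : ℝ))
      (message G x a u v) (message G x b u v)} ≤ ∑ j ∈ range k, r j := by
  have hsub : {x | DiscrepancyIn (Set.Iio (k / N : ℝ)) (message G x a u v) (message G x b u v)}
      ≤ᵐ[seedMeasure V (Fin 4)] ⋃ j ∈ range k, {x | DiscrepancyIn
        (Set.Ico (j / N : ℝ) ((j + 1) / N)) (message G x a u v) (message G x b u v)} := by
    filter_upwards [ae_message_time_mem_Ico hG huv] with x hx h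
    obtain ⟨j, hj, h⟩ := DiscrepancyIn.exists_window hN h (hx a).1 (hx b).1
    exact Set.mem_biUnion (mem_range.2 hj) h
  calc _ ≤ _ := ENNReal.toReal_mono (measure_ne_top _ _) (measure_mono_ae hsub)
    _ ≤ _ := measureReal_biUnion_finset_le _ _
    _ ≤ _ := sum_le_sum fun j hj => hr j (mem_range.1 hj)

/-- In windows of length `1 / 2100` the contraction factor is `210 / 2100 + 4 / 5 = 9 / 10`; with
the weights `201 ^ k` the discrepancies of the windows before the `k`-th add at most another
`1 / 20`. -/
lemma measureReal_discrepancyFrom_window_le (hG : G.IsAcyclic) (hreg : G.IsRegularOfDegree 6)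
    (huv : G.Adj u v) {k : ℕ} (hk : k < 2100) (i j n : ℕ) :
    (seedMeasure V (Fin 4)).real {x | DiscrepancyFrom
        (Set.Ico (k / (2100 : ℕ) : ℝ) ((k + 1) / (2100 : ℕ)))
        (message G x (i + n) u v) (message G x (j + n) u v)} ≤ 201 ^ k * (19 / 20) ^ n := by
  induction n generalizing u v k i j with
  | zero => exact measureReal_le_one.trans (by simpa using one_le_pow₀ (by norm_num))
  | succ n ih =>
    have hearly (w) (hvw : G.Adj v w) :=
      measureReal_discrepancyIn_Iio_le hG hvw (by norm_num) k (i + n) (j + n) fun l hl =>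
        measureReal_discrepancyIn_le (ih hvw (hl.trans hk) i j) (ih hvw (hl.trans hk) j i)
    have hk₁ : (k + 1 : ℝ) / (2100 : ℕ) ≤ 1 :=
      (div_le_one (by norm_num)).2 (by exact_mod_cast hk)
    have hgeom := geom_sum_mul (201 : ℝ) k
    calc _ ≤ _ := measureReal_discrepancyFrom_succ_le hG hreg huv (by positivity)
          (by gcongr; exact le_add_of_nonneg_right zero_le_one) hk₁ hearly
          (fun w hvw => ih hvw hk i j) fun w hvw => ih hvw hk j i
      _ = (10 * ∑ l ∈ range k, 201 ^ l + 9 / 10 * 201 ^ k) * (19 / 20) ^ n := by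
        rw [← mul_sum, ← sum_mul]
        push_cast
        ring
      _ ≤ 19 / 20 * 201 ^ k * (19 / 20) ^ n := by
        gcongr
        linarith
      _ = _ := by ring

lemma measureReal_message_succ_ne_le (hG : G.IsAcyclic) (hreg : G.IsRegularOfDegree 6)
    (huv : G.Adj u v) (n : ℕ) :
    (seedMeasure V (Fin 4)).real {x | message G x n u v ≠ message G x (n + 1) u v}
      ≤ (∑ k ∈ range 2100, 2 * 201 ^ k) * (19 / 20) ^ n := by
  have hsub : {x | message G x n u v ≠ message G x (n + 1) u v} ≤ᵐ[seedMeasure V (Fin 4)]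
      {x | DiscrepancyIn (Set.Iio ((2100 : ℕ) / (2100 : ℕ) : ℝ))
        (message G x n u v) (message G x (n + 1) u v)} := by
    filter_upwards [ae_message_time_mem_Ico hG huv] with x hx hne
    refine ⟨hne, Set.mem_Iio.2 (min_lt_of_left_lt ?_)⟩
    rw [div_self (by norm_num)]
    exact (hx n).2
  refine (ENNReal.toReal_mono (measure_ne_top _ _) (measure_mono_ae hsub)).trans ?_
  rw [sum_mul]
  refine measureReal_discrepancyIn_Iio_le hG huv (by norm_num) 2100 n (n + 1) fun k hk => ?_
  have hab := measureReal_discrepancyFrom_window_le hG hreg huv hk 0 1 n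
  have hba := measureReal_discrepancyFrom_window_le hG hreg huv hk 1 0 n
  rw [zero_add, add_comm 1 n] at hab hba
  rw [mul_assoc]
  exact measureReal_discrepancyIn_le hab hba

lemma ae_eventually_message_succ_eq (hG : G.IsAcyclic) (hreg : G.IsRegularOfDegree 6) :
    ∀ᵐ x ∂(seedMeasure V (Fin 4)), ∀ u v, G.Adj u v →
      ∀ᶠ n in atTop, message G x (n + 1) u v = message G x n u v := by
  refine ae_all_iff.2 fun u => ae_all_iff.2 fun v => ?_
  by_cases huv : G.Adj u v
  swap; · exact .of_forall fun _ h => absurd h huv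
  have hsum : Summable fun n =>
      (seedMeasure V (Fin 4)).real {x | message G x n u v ≠ message G x (n + 1) u v} :=
    .of_nonneg_of_le (fun _ => measureReal_nonneg) (measureReal_message_succ_ne_le hG hreg huv)
      ((summable_geometric_of_lt_one (by norm_num) (by norm_num)).mul_left _)
  have htsum := hsum.tsum_ofReal_ne_top
  simp_rw [fun n => ofReal_measureReal (μ := seedMeasure V (Fin 4))
    (s := {x | message G x n u v ≠ message G x (n + 1) u v})] at htsum
  filter_upwards [ae_eventually_notMem htsum] with x hx _
  exact hx.mono fun n hn => (of_not_not hn).symm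

end Stabilization

section LimitColoring

open Filter

variable {V : Type*} [DecidableEq V] {G : SimpleGraph V} [G.LocallyFinite]

variable (G) in
/-- The colouring to which `vertexColor` stabilizes. The limit is taken as an upper limit in the
linear order `Fin 4`, which is measurable and always defined. -/
noncomputable def limitColor (x : V → ℝ × Fin 4) (v : V) : Fin 4 :=
  limsup (fun n => vertexColor G x n v) atTop

lemma measurable_limitColor : Measurable (limitColor G) :=
  measurable_pi_lambda _ fun v => .limsup fun n => measurable_vertexColor n v

lemma limitColor_comp_iso (x : V → ℝ × Fin 4) (φ : G ≃g G) (v : V) :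
    limitColor G (fun u => x (φ.symm u)) v = limitColor G x (φ.symm v) := by
  simp only [limitColor, vertexColor_comp_iso]

lemma eventually_vertexColor_eq_limitColor {x : V → ℝ × Fin 4} {v : V}
    (h : ∀ w ∈ G.neighborFinset v, ∀ᶠ n in atTop, message G x (n + 1) v w = message G x n v w) :
    ∀ᶠ n in atTop, vertexColor G x n v = limitColor G x v := by
  have hstep : ∀ᶠ n in atTop, vertexColor G x (n + 1) v = vertexColor G x n v := by
    filter_upwards [(eventually_all_finset _).2 h] with n hn
    exact congrArg Prod.snd (recolor_congr (x v) fun r => by grind [mem_usedLE])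
  obtain ⟨c, hc⟩ : ∃ c, (fun n => vertexColor G x n v) =ᶠ[atTop] fun _ => c :=
    eventuallyConst_iff_exists_eventuallyEq.1
      (eventuallyConst_atTop_nat.2 (eventually_atTop.1 hstep))
  rwa [limitColor, limsup_congr hc, limsup_const]

lemma ae_limitColor_ne [Countable V] (hG : G.IsAcyclic) (hreg : G.IsRegularOfDegree 6) :
    ∀ᵐ x ∂(seedMeasure V (Fin 4)), ∀ u v, G.Adj u v → limitColor G x u ≠ limitColor G x v := by
  filter_upwards [ae_eventually_message_succ_eq hG hreg, ae_injective_clock] with x hx hinj u v huv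
  have hlim (v) : ∀ᶠ n in atTop, vertexColor G x n v = limitColor G x v :=
    eventually_vertexColor_eq_limitColor fun w hw => hx v w ((G.mem_neighborFinset v w).1 hw)
  obtain ⟨n, hu, hv, hvu, huv'⟩ :=
    ((hlim u).and ((hlim v).and ((hx v u huv.symm).and (hx u v huv)))).exists
  rw [← hu, ← hv]
  exact vertexColor_ne_of_message_succ_eq hG hinj huv hvu huv'

end LimitColoring

lemma exists_measurePreserving_seedMeasure {V : Type*} {μ : Measure (V → ℝ)}
    (hμ : ∀ s : Finset V, Measure.map (fun (x : V → ℝ) (v : s) => x v) μ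
      = Measure.pi (fun _ : s => volume.restrict (Set.Icc (0 : ℝ) 1))) :
    ∃ g : ℝ → ℝ × Fin 4,
      MeasurePreserving (fun (x : V → ℝ) v => g (x v)) μ (seedMeasure V (Fin 4)) := by
  have : IsProbabilityMeasure (volume.restrict (Set.Icc (0 : ℝ) 1)) := ⟨by simp⟩
  obtain ⟨g, hg, hmap⟩ := exists_measurable_map_uniform_eq (seedLaw (Fin 4))
  have hproj : IsProjectiveLimit μ
      fun s : Finset V => Measure.pi fun _ : s => volume.restrict (Set.Icc (0 : ℝ) 1) := hμ
  refine ⟨g, by fun_prop, ?_⟩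
  rw [hproj.unique (Measure.isProjectiveLimit_infinitePi fun _ => volume.restrict (Set.Icc 0 1)),
    Measure.infinitePi_map_pi _ fun _ => hg, hmap]

end TreeColoring

theorem fiid_approximate_five_coloring_of_T6_general {V : Type*} [Countable V] (G : SimpleGraph V)
    (hacyc : G.IsAcyclic) (hreg : ∀ v : V, (G.neighborSet v).ncard = 6) (μ : Measure (V → ℝ))
    (hμ : ∀ s : Finset V, Measure.map (fun (x : V → ℝ) (v : s) => x v) μ
      = Measure.pi (fun _ : s => volume.restrict (Set.Icc (0 : ℝ) 1))) :
    ∃ f : (V → ℝ) → (V → Fin 4), Measurable f ∧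
      (∀ (φ : G ≃g G) (x : V → ℝ) (v : V), f (fun u => x (φ.symm u)) v = f x (φ.symm v)) ∧
      ∀ᵐ x ∂μ, ∀ u v : V, G.Adj u v → f x u ≠ f x v := by
  classical
  have hfin (v) : (G.neighborSet v).Finite := Set.finite_of_ncard_ne_zero (by simp [hreg v])
  let : G.LocallyFinite := fun v => (hfin v).fintype
  have hdeg : G.IsRegularOfDegree 6 := fun v => by
    rw [← G.card_neighborSet_eq_degree, ← Nat.card_eq_fintype_card]
    exact hreg v
  obtain ⟨g, hg⟩ := TreeColoring.exists_measurePreserving_seedMeasure hμ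
  exact ⟨fun x => TreeColoring.limitColor G fun v => g (x v),
    TreeColoring.measurable_limitColor.comp hg.measurable,
    fun φ x v => TreeColoring.limitColor_comp_iso (fun v => g (x v)) φ v,
    hg.quasiMeasurePreserving.ae (TreeColoring.ae_limitColor_ne hacyc hdeg)⟩

/-- For every ε > 0, the 6-regular tree admits an fiid labelling with 5 labels which is
a.e. proper (everywhere) and assigns the label 4 to a given vertex with probability less than ε. -/
theorem fiid_approximate_five_coloring_of_T6
    (V : Type) [Countable V] [Infinite V]
    (G : SimpleGraph V) (hconn : G.Connected) (hacyc : G.IsAcyclic)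
    (hreg : ∀ v : V, (G.neighborSet v).ncard = 6)
    (μ : Measure (V → ℝ)) [IsProbabilityMeasure μ]
    (hμ : ∀ s : Finset V,
      Measure.map (fun (x : V → ℝ) (v : s) => x v) μ
        = Measure.pi (fun _ : s => volume.restrict (Set.Icc (0:ℝ) 1)))
    (ε : ℝ) (hε : 0 < ε) :
    ∃ f : (V → ℝ) → (V → Fin 5),
      Measurable f ∧
      (∀ (φ : G ≃g G) (x : V → ℝ) (v : V),
        f (fun u => x (φ.symm u)) v = f x (φ.symm v)) ∧
      (∀ᵐ x ∂μ, ∀ u v : V, G.Adj u v → f x u ≠ f x v) ∧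
      (∀ v : V, μ {x | f x v = 4} < ENNReal.ofReal ε) := by
  obtain ⟨f, hf, hequiv, hproper⟩ := fiid_approximate_five_coloring_of_T6_general G hacyc hreg μ hμ
  refine ⟨fun x v => (f x v).castSucc, by fun_prop, fun φ x v => congrArg _ (hequiv φ x v),
    hproper.mono fun x hx u v huv => (Fin.castSucc_injective 4).ne (hx u v huv), fun v => ?_⟩
  have hne (x) : (f x v).castSucc ≠ 4 := (f x v).castSucc_ne_last
  simpa [hne] using hε
end
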